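/- There exists a constant C > 0 (independent of n) such that for every n ≥ 2, sup_{x ∈ ℝ} | P( (I_n − E[I_n]) / sqrt(Var(I_n)) ≤ x ) − Φ(x) | ≤ C / sqrt(n), where I_n is the number of descents of a uniformly random involution of the symmetric group S_n and Φ is the cumulative distribution function of the standard normal distribution. -/

import Mathlib

open Finset

/-- The number of descents of a permutation of `Fin n`:
positions `i` with `i+1 < n` and `π(i) > π(i+1)`. -/
def descents {n : ℕ} (π : Equiv.Perm (Fin n)) : ℕ :=
  (Finset.univ.filter fun i : Fin n =>
    ∃ h : (i : ℕ) + 1 < n, π ⟨(i : ℕ) + 1, h⟩ < π i).card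

/-- The involutions of the symmetric group `S_n`. -/
def involutions (n : ℕ) : Finset (Equiv.Perm (Fin n)) :=
  Finset.univ.filter fun π => π * π = 1

/-- The standard normal cumulative distribution function. -/
noncomputable def stdNormalCDF (x : ℝ) : ℝ :=
  (Real.sqrt (2 * Real.pi))⁻¹ * ∫ t in Set.Iic x, Real.exp (-(t ^ 2) / 2)

/-- Mean number of descents of a uniformly random involution of `S_n`. -/
noncomputable def invMean (n : ℕ) : ℝ :=
  (∑ π ∈ involutions n, (descents π : ℝ)) / (involutions n).card

/-- Variance of the number of descents of a uniformly random involution of `S_n`. -/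
noncomputable def invVar (n : ℕ) : ℝ :=
  (∑ π ∈ involutions n, ((descents π : ℝ) - invMean n) ^ 2) / (involutions n).card

/-- `P((I_n - E I_n)/sqrt(Var I_n) ≤ x)` under the uniform measure on involutions. -/
noncomputable def invCDF (n : ℕ) (x : ℝ) : ℝ :=
  (((involutions n).filter fun π =>
      ((descents π : ℝ) - invMean n) / Real.sqrt (invVar n) ≤ x).card : ℝ) /
    (involutions n).card

/-! ### Combinatorics: words compatible with a permutation -/

def okWord {n s : ℕ} (π : Equiv.Perm (Fin n)) (w : Fin n → Fin s) : Prop :=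
  StrictMono (fun i => toLex (w i, π i))

lemma descents_succ {n : ℕ} (π : Equiv.Perm (Fin (n+1))) :
    descents π = (Finset.univ.filter fun j : Fin n => π j.succ < π j.castSucc).card := by
  unfold descents
  symm
  apply Finset.card_bij (fun (j : Fin n) _ => j.castSucc)
  · intro j hj
    simp only [Finset.mem_filter, Finset.mem_univ, true_and] at hj ⊢
    exact ⟨by simp, hj⟩
  · intro a _ b _ h
    exact Fin.castSucc_injective _ h
  · intro b hb
    simp only [Finset.mem_filter, Finset.mem_univ, true_and] at hb
    obtain ⟨h, hb⟩ := hb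
    refine ⟨⟨b, by omega⟩, ?_, ?_⟩
    · simp only [Finset.mem_filter, Finset.mem_univ, true_and]
      exact hb
    · ext; rfl

def ascUpTo {n : ℕ} (π : Equiv.Perm (Fin (n+1))) (k : ℕ) : ℕ :=
  (Finset.univ.filter fun j : Fin n => (j : ℕ) < k ∧ ¬ π j.succ < π j.castSucc).card

lemma ascUpTo_zero {n : ℕ} (π : Equiv.Perm (Fin (n+1))) : ascUpTo π 0 = 0 := by
  simp [ascUpTo]

lemma ascUpTo_succ {n : ℕ} (π : Equiv.Perm (Fin (n+1))) (i : Fin n) :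
    ascUpTo π (i+1) = ascUpTo π i + if π i.succ < π i.castSucc then 0 else 1 := by
  unfold ascUpTo
  split_ifs with h
  · refine Eq.trans ?_ (Nat.add_zero _).symm
    refine congrArg Finset.card ?_
    ext j
    simp only [Finset.mem_filter, Finset.mem_univ, true_and]
    constructor
    · rintro ⟨h1, h2⟩
      refine ⟨?_, h2⟩
      rcases Nat.lt_or_ge j i with h3 | h3
      · exact h3
      · have : j = i := by ext; omega
        subst this; exact absurd h h2
    · rintro ⟨h1, h2⟩
      exact ⟨by omega, h2⟩
  · rw [← Finset.card_insert_of_notMem (a := i) (by simp)]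
    refine congrArg Finset.card ?_
    ext j
    simp only [Finset.mem_filter, Finset.mem_univ, true_and, Finset.mem_insert]
    constructor
    · rintro ⟨h1, h2⟩
      rcases Nat.lt_or_ge j i with h3 | h3
      · exact Or.inr ⟨h3, h2⟩
      · left; ext; omega
    · rintro (rfl | ⟨h1, h2⟩)
      · exact ⟨by omega, h⟩
      · exact ⟨by omega, h2⟩

lemma ascUpTo_last {n : ℕ} (π : Equiv.Perm (Fin (n+1))) :
    ascUpTo π n + descents π = n := by
  rw [descents_succ, ascUpTo]
  have := Finset.card_filter_add_card_filter_not (s := (Finset.univ : Finset (Fin n)))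
    (fun j => π j.succ < π j.castSucc)
  simp only [Finset.card_univ, Fintype.card_fin] at this
  simp only [Fin.is_lt, true_and]
  omega

lemma okWord_iff {n s : ℕ} (π : Equiv.Perm (Fin (n+1))) (w : Fin (n+1) → Fin s) :
    okWord π w ↔ ∀ i : Fin n, (w i.castSucc : ℕ) + ascUpTo π i < w i.succ + ascUpTo π (i+1) := by
  unfold okWord
  rw [Fin.strictMono_iff_lt_succ]
  refine forall_congr' fun i => ?_
  rw [ascUpTo_succ, Prod.Lex.toLex_lt_toLex]
  have hne : π i.castSucc ≠ π i.succ := by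
    intro h
    have := π.injective h
    exact absurd this (Fin.castSucc_lt_succ).ne
  split_ifs with h
  · constructor
    · rintro (h1 | h1)
      · have : (w i.castSucc : ℕ) < w i.succ := h1
        omega
      · exact absurd h1.2 (not_lt.2 h.le)
    · intro h1
      left
      show (w i.castSucc : ℕ) < w i.succ
      omega
  · have h' : π i.castSucc < π i.succ := lt_of_le_of_ne (not_lt.1 h) hne
    constructor
    · rintro (h1 | h1)
      · have : (w i.castSucc : ℕ) < w i.succ := h1
        omega
      · have : w i.castSucc = w i.succ := h1.1
        rw [this]; omega
    · intro h1
      have h2 : (w i.castSucc : ℕ) ≤ w i.succ := by omega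
      rcases h2.lt_or_eq with h3 | h3
      · exact Or.inl h3
      · exact Or.inr ⟨Fin.ext h3, h'⟩

lemma card_okWord {n : ℕ} (s : ℕ) (π : Equiv.Perm (Fin (n+1))) :
    Nat.card {w : Fin (n+1) → Fin s // okWord π w} = (s + n - descents π).choose (n+1) := by
  have hlast := ascUpTo_last π
  have e : {w : Fin (n+1) → Fin s // okWord π w} ≃ (Fin (n+1) ↪o Fin (s + n - descents π)) := by
    have hmono : ∀ w : Fin (n+1) → Fin s, okWord π w →
        StrictMono (fun i : Fin (n+1) => (w i : ℕ) + ascUpTo π i) := by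
      intro w hw
      rw [Fin.strictMono_iff_lt_succ]
      intro i
      have := (okWord_iff π w).1 hw i
      simpa using this
    have hle : ∀ i : Fin (n+1), ascUpTo π i ≤ i := by
      intro i
      refine Fin.induction ?_ ?_ i
      · simp [ascUpTo_zero]
      · intro j hj
        have := ascUpTo_succ π j
        simp only [Fin.val_castSucc, Fin.val_succ] at *
        split_ifs at this <;> omega
    have hsub : ∀ W : Fin (n+1) ↪o Fin (s + n - descents π),
        (∀ i : Fin (n+1), (i : ℕ) ≤ W i) ∧
        Monotone (fun i : Fin (n+1) => (W i : ℕ) - ascUpTo π i) := by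
      intro W
      have h0 : ∀ i : Fin (n+1), (i : ℕ) ≤ W i := by
        intro i
        refine Fin.induction ?_ ?_ i
        · simp
        · intro j hj
          have h1 : W j.castSucc < W j.succ := W.strictMono Fin.castSucc_lt_succ
          have h2 : (W j.castSucc : ℕ) < W j.succ := h1
          simp only [Fin.val_castSucc, Fin.val_succ] at *
          omega
      refine ⟨h0, ?_⟩
      rw [Fin.monotone_iff_le_succ]
      intro j
      have h1 : W j.castSucc < W j.succ := W.strictMono Fin.castSucc_lt_succ
      have h2 : (W j.castSucc : ℕ) < W j.succ := h1
      have h3 := ascUpTo_succ π j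
      have h4 := h0 j.castSucc
      have h5 := hle j.castSucc
      simp only [Fin.val_castSucc, Fin.val_succ] at *
      split_ifs at h3 <;> omega
    refine
      { toFun := fun w => OrderEmbedding.ofStrictMono
          (fun i => ⟨(w.1 i : ℕ) + ascUpTo π i, ?_⟩) ?_
        invFun := fun W => ⟨fun i => ⟨(W i : ℕ) - ascUpTo π i, ?_⟩, ?_⟩
        left_inv := ?_
        right_inv := ?_ }
    · have h1 := (hmono w.1 w.2).monotone (Fin.le_last i)
      have h2 := (w.1 (Fin.last n)).2
      simp only [Fin.val_last] at h1
      omega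
    · intro i j hij
      exact hmono w.1 w.2 hij
    · have h1 := (hsub W).2 (Fin.le_last i)
      have h2 := (W (Fin.last n)).2
      have h3 := (hsub W).1 (Fin.last n)
      simp only [Fin.val_last] at h1 h3
      omega
    · rw [okWord_iff]
      intro i
      have h1 : W i.castSucc < W i.succ := W.strictMono Fin.castSucc_lt_succ
      have h2 : (W i.castSucc : ℕ) < W i.succ := h1
      have h4 := (hsub W).1 i.castSucc
      have h5 := hle i.castSucc
      have h6 := (hsub W).1 i.succ
      have h7 := hle i.succ
      simp only [Fin.val_castSucc, Fin.val_succ] at *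
      omega
    · intro w
      ext i
      show ((w.1 i : ℕ) + ascUpTo π i) - ascUpTo π i = _
      omega
    · intro W
      ext i
      have h6 := (hsub W).1 i
      have h7 := hle i
      show ((W i : ℕ) - ascUpTo π i) + ascUpTo π i = _
      omega
  rw [Nat.card_congr e, Nat.card_congr (Set.powersetCard.ofFinEmbEquiv)]
  rw [Set.powersetCard.card, Nat.card_eq_fintype_card, Fintype.card_fin]

lemma exists_perm_of_fibers {n : ℕ} {α : Type*} [DecidableEq α] (f g : Fin n → α)
    (h : ∀ c, (univ.filter fun i => f i = c).card = (univ.filter fun i => g i = c).card) :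
    ∃ τ : Equiv.Perm (Fin n), g = f ∘ τ := by
  have e : ∀ c, Nonempty ({a // g a = c} ≃ {b // f b = c}) := by
    intro c
    refine ⟨Fintype.equivOfCardEq ?_⟩
    rw [Fintype.card_subtype, Fintype.card_subtype, h c]
  refine ⟨Equiv.ofFiberEquiv (fun c => (e c).some), ?_⟩
  funext i
  exact (Equiv.ofFiberEquiv_map (fun c => (e c).some) i).symm

lemma eq_of_monotone_fibers {n : ℕ} {α : Type*} [LinearOrder α] (f g : Fin n → α)
    (h : ∀ c, (univ.filter fun i => f i = c).card = (univ.filter fun i => g i = c).card)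
    (hf : Monotone f) (hg : Monotone g) : f = g := by
  obtain ⟨τ, rfl⟩ := exists_perm_of_fibers f g h
  have := Tuple.unique_monotone (f := f) (σ := 1) (τ := τ) (by simpa using hf) hg
  simpa using this

lemma okWord.mono {n s : ℕ} {π : Equiv.Perm (Fin n)} {w : Fin n → Fin s} (h : okWord π w) :
    Monotone w := by
  intro i j hij
  rcases hij.lt_or_eq with hij | rfl
  · have := h hij
    simp only [Prod.Lex.toLex_lt_toLex] at this
    rcases this with h1 | h1
    · exact h1.le
    · exact h1.1.le
  · exact le_rfl

lemma okWord.lt {n s : ℕ} {π : Equiv.Perm (Fin n)} {w : Fin n → Fin s} (h : okWord π w)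
    {i j : Fin n} (hij : i < j) (hw : w i = w j) : π i < π j := by
  have := h hij
  simp only [Prod.Lex.toLex_lt_toLex] at this
  rcases this with h1 | h1
  · exact absurd hw h1.ne
  · exact h1.2

lemma okWord.eq_sort {n s : ℕ} {π : Equiv.Perm (Fin n)} {w : Fin n → Fin s} (h : okWord π w)
    (hπ : π * π = 1) : π = Tuple.sort (w ∘ π) := by
  have hpp : ∀ i, π (π i) = i := fun i => by
    have := congrArg (fun σ : Equiv.Perm (Fin n) => σ i) hπ
    simpa using this
  rw [Tuple.eq_sort_iff]
  constructor
  · intro i j hij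
    simp only [Function.comp, hpp]
    exact h.mono hij
  · intro i j hij hw
    simp only [Function.comp, hpp] at hw
    exact h.lt hij hw

lemma okWord.pair_mono {n s : ℕ} {π : Equiv.Perm (Fin n)} {w : Fin n → Fin s} (h : okWord π w) :
    Monotone (fun i => toLex (w i, w (π i))) := by
  intro i j hij
  rcases hij.lt_or_eq with hij | rfl
  · rw [Prod.Lex.toLex_le_toLex]
    rcases (h.mono hij.le).lt_or_eq with h1 | h1
    · exact Or.inl h1
    · exact Or.inr ⟨h1, h.mono (h.lt hij h1).le⟩
  · exact le_rfl

abbrev InvWord (n s : ℕ) : Type :=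
  {x : Equiv.Perm (Fin n) × (Fin n → Fin s) // x.1 * x.1 = 1 ∧ okWord x.1 x.2}

abbrev SymMat (n s : ℕ) : Type :=
  {A : Fin s × Fin s → ℕ // (∀ a b, A (a, b) = A (b, a)) ∧ ∑ p, A p = n}

def invWordToMat {n s : ℕ} (x : InvWord n s) : SymMat n s :=
  ⟨fun p => (univ.filter fun i => (x.1.2 i, x.1.2 (x.1.1 i)) = p).card, by
    have hpp : ∀ i, x.1.1 (x.1.1 i) = i := fun i => by
      have := congrArg (fun σ : Equiv.Perm (Fin n) => σ i) x.2.1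
      simpa using this
    constructor
    · intro a b
      apply Finset.card_bij (fun i _ => x.1.1 i)
      · intro i hi
        simp only [mem_filter, mem_univ, true_and, Prod.mk.injEq, hpp] at hi ⊢
        exact ⟨hi.2, hi.1⟩
      · intro i _ j _ h
        exact x.1.1.injective h
      · intro i hi
        simp only [mem_filter, mem_univ, true_and, Prod.mk.injEq] at hi
        refine ⟨x.1.1 i, ?_, hpp i⟩
        simp only [mem_filter, mem_univ, true_and, Prod.mk.injEq, hpp]
        exact ⟨hi.2, hi.1⟩
    · rw [← Finset.card_eq_sum_card_fiberwise (s := univ) (t := univ)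
        (f := fun i => (x.1.2 i, x.1.2 (x.1.1 i))) (by intro i _; simp)]
      simp⟩

lemma invWordToMat_inj {n s : ℕ} : Function.Injective (invWordToMat (n := n) (s := s)) := by
  rintro ⟨⟨π, w⟩, h1, h2⟩ ⟨⟨π', w'⟩, h1', h2'⟩ h
  simp only [invWordToMat, Subtype.mk.injEq] at h
  have h3 : (fun i => toLex (w i, w (π i))) = (fun i => toLex (w' i, w' (π' i))) := by
    apply eq_of_monotone_fibers _ _ _ h2.pair_mono h2'.pair_mono
    intro c
    exact congrFun h (ofLex c)
  have hw : w = w' := by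
    funext i
    exact congrArg (fun p => (ofLex p).1) (congrFun h3 i)
  have hv : w ∘ π = w' ∘ π' := by
    funext i
    exact congrArg (fun p => (ofLex p).2) (congrFun h3 i)
  have hπ : π = π' := by
    have e1 : π = Tuple.sort (w ∘ π) := h2.eq_sort h1
    have e2 : π' = Tuple.sort (w' ∘ π') := h2'.eq_sort h1'
    rw [e1, e2, hv]
  subst hw hπ
  rfl

lemma invWordToMat_surj {n s : ℕ} : Function.Surjective (invWordToMat (n := n) (s := s)) := by
  rintro ⟨A, hsym, hsum⟩
  -- an arbitrary enumeration
  have hcard : Fintype.card (Σ p : Fin s × Fin s, Fin (A p)) = Fintype.card (Fin n) := by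
    simp [hsum]
  obtain e := (Fintype.equivOfCardEq hcard).symm
  let p₀ : Fin n → Lex (Fin s × Fin s) := fun i => toLex (e i).1
  have hp₀ : ∀ c, (univ.filter fun i => p₀ i = toLex c).card = A c := by
    intro c
    have e2 : {i // p₀ i = toLex c} ≃ Fin (A c) :=
      { toFun := fun i => (e i.1).2.cast (by
          have : (e i.1).1 = c := toLex.injective i.2
          rw [this])
        invFun := fun k => ⟨e.symm ⟨c, k⟩, by simp [p₀]⟩
        left_inv := by
          rintro ⟨i, hi⟩
          have h1 : (e i).1 = c := toLex.injective hi
          apply Subtype.ext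
          simp only
          rw [Equiv.symm_apply_eq]
          subst h1
          rfl
        right_inv := by
          intro k
          ext
          have : ∀ (y z : Σ p : Fin s × Fin s, Fin (A p)), y = z → (y.2 : ℕ) = (z.2 : ℕ) := by
            rintro y z rfl; rfl
          exact this _ _ (e.apply_symm_apply ⟨c, k⟩) }
    rw [← Fintype.card_subtype, Fintype.card_congr e2, Fintype.card_fin]
  let p := p₀ ∘ Tuple.sort p₀
  have hpm : Monotone p := Tuple.monotone_sort p₀
  have hp : ∀ c, (univ.filter fun i => p i = toLex c).card = A c := by
    intro c
    rw [← hp₀ c]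
    apply Finset.card_bij (fun i _ => Tuple.sort p₀ i)
    · intro i hi
      simpa [p] using hi
    · intro i _ j _ h
      exact (Tuple.sort p₀).injective h
    · intro i hi
      exact ⟨(Tuple.sort p₀).symm i, by simpa [p] using hi, by simp⟩
  let w : Fin n → Fin s := fun i => (ofLex (p i)).1
  let v : Fin n → Fin s := fun i => (ofLex (p i)).2
  have hpw : ∀ i, p i = toLex (w i, v i) := fun i => rfl
  let σ := Tuple.sort v
  obtain ⟨hσ1, hσ2⟩ := (Tuple.eq_sort_iff (f := v) (σ := σ)).1 rfl
  have hle : ∀ i j, i ≤ j → w i < w j ∨ w i = w j ∧ v i ≤ v j := by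
    intro i j hij
    have := hpm hij
    rw [hpw, hpw, Prod.Lex.toLex_le_toLex] at this
    exact this
  have hwm : Monotone w := by
    intro i j hij
    rcases hle i j hij with h | h
    · exact h.le
    · exact h.1.le
  let q : Fin n → Lex (Fin s × Fin s) := fun i => toLex (v (σ i), w (σ i))
  have hqm : Monotone q := by
    intro i j hij
    rcases hij.lt_or_eq with hij | rfl
    · show toLex _ ≤ toLex _
      rw [Prod.Lex.toLex_le_toLex]
      rcases (hσ1 hij.le).lt_or_eq with h1 | h1
      · exact Or.inl h1
      · exact Or.inr ⟨h1, hwm (hσ2 i j hij h1).le⟩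
    · exact le_rfl
  have hqp : p = q := by
    apply eq_of_monotone_fibers _ _ _ hpm hqm
    intro c
    obtain ⟨⟨a, b⟩, rfl⟩ := toLex.surjective c
    rw [hp, hsym, ← hp]
    symm
    apply Finset.card_bij (fun i _ => σ i)
    · intro i hi
      simp only [q, hpw, mem_filter, mem_univ, true_and, EmbeddingLike.apply_eq_iff_eq,
        Prod.mk.injEq] at hi ⊢
      exact ⟨hi.2, hi.1⟩
    · intro i _ j _ h
      exact σ.injective h
    · intro i hi
      refine ⟨σ.symm i, ?_, by simp⟩
      simp only [q, hpw, mem_filter, mem_univ, true_and, EmbeddingLike.apply_eq_iff_eq,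
        Prod.mk.injEq, Equiv.apply_symm_apply] at hi ⊢
      exact ⟨hi.2, hi.1⟩
  have hwv : ∀ i, w i = v (σ i) := fun i => congrArg (fun p => (ofLex p).1) (congrFun hqp i)
  have hvw : ∀ i, v i = w (σ i) := fun i => congrArg (fun p => (ofLex p).2) (congrFun hqp i)
  have hσlt : ∀ i j, (v i < v j ∨ v i = v j ∧ i < j) → σ.symm i < σ.symm j := by
    intro i j h
    by_contra hcon
    rcases (not_lt.1 hcon).lt_or_eq with h1 | h1
    · have h2 := hσ1 h1.le
      have h3 := hσ2 _ _ h1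
      simp only [Function.comp, Equiv.apply_symm_apply] at h2 h3
      rcases h with h | h
      · exact absurd h2 (not_le.2 h)
      · exact absurd (h3 h.1.symm) (not_lt.2 h.2.le)
    · have h2 := σ.symm.injective h1
      subst h2
      rcases h with h | h
      · exact lt_irrefl _ h
      · exact lt_irrefl _ h.2
  have hinv : σ.symm = σ := by
    show σ.symm = Tuple.sort v
    rw [Tuple.eq_sort_iff]
    constructor
    · intro i j hij
      simp only [Function.comp]
      rw [hvw, hvw, Equiv.apply_symm_apply, Equiv.apply_symm_apply]
      exact hwm hij
    · intro i j hij h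
      rw [hvw, hvw, Equiv.apply_symm_apply, Equiv.apply_symm_apply] at h
      apply hσlt
      rcases hle i j hij.le with h1 | h1
      · exact absurd h h1.ne
      · rcases h1.2.lt_or_eq with h2 | h2
        · exact Or.inl h2
        · exact Or.inr ⟨h2, hij⟩
  refine ⟨⟨(σ, w), ?_, ?_⟩, ?_⟩
  · ext i
    have h1 : σ (σ i) = i := by
      conv_lhs => rw [← hinv]
      rw [Equiv.symm_apply_eq, hinv]
    simp [h1]
  · intro i j hij
    show toLex _ < toLex _
    rw [Prod.Lex.toLex_lt_toLex]
    rcases (hwm hij.le).lt_or_eq with h1 | h1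
    · exact Or.inl h1
    · refine Or.inr ⟨h1, hσ2 i j hij ?_⟩
      rw [← hwv, ← hwv]; exact h1
  · apply Subtype.ext
    funext c
    simp only [invWordToMat]
    rw [← hp c]
    congr 1
    ext i
    simp only [mem_filter, mem_univ, true_and, ← hvw]
    exact (toLex.injective.eq_iff).symm

lemma card_invWord (n s : ℕ) : Nat.card (InvWord n s) = Nat.card (SymMat n s) :=
  Nat.card_congr (Equiv.ofBijective _ ⟨invWordToMat_inj, invWordToMat_surj⟩)

lemma card_invWord_eq_sum (n s : ℕ) :
    Nat.card (InvWord (n+1) s) =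
      ∑ π ∈ involutions (n+1), (s + n - descents π).choose (n+1) := by
  classical
  have e : InvWord (n+1) s ≃ Σ π : {π // π ∈ involutions (n+1)},
      {w : Fin (n+1) → Fin s // okWord π.1 w} :=
    { toFun := fun x => ⟨⟨x.1.1, by simp [involutions, x.2.1]⟩, ⟨x.1.2, x.2.2⟩⟩
      invFun := fun y => ⟨(y.1.1, y.2.1), by
        exact (Finset.mem_filter.1 y.1.2).2, y.2.2⟩
      left_inv := fun x => rfl
      right_inv := fun y => rfl }
  rw [Nat.card_congr e, Nat.card_sigma]
  simp only [card_okWord]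
  rw [← Finset.sum_coe_sort (involutions (n+1))
    (fun π => (s + n - descents π).choose (n+1))]

abbrev Off (s : ℕ) : Type := {p : Fin s × Fin s // p.1 < p.2}

lemma sum_sym {s : ℕ} (A : Fin s × Fin s → ℕ) (hA : ∀ a b, A (a, b) = A (b, a)) :
    ∑ p, A p = ∑ a, A (a, a) + 2 * ∑ p : Off s, A p.1 := by
  have h1 : ∑ p : Off s, A p.1 = ∑ p : Fin s × Fin s, if p.1 < p.2 then A p else 0 := by
    rw [← Finset.sum_filter, Finset.sum_subtype (p := fun p : Fin s × Fin s => p.1 < p.2)]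
    intro x; simp
  have h2 : ∑ p : Fin s × Fin s, (if p.1 < p.2 then A p else 0)
      = ∑ p : Fin s × Fin s, (if p.2 < p.1 then A p else 0) := by
    rw [← Equiv.sum_comp (Equiv.prodComm (Fin s) (Fin s))]
    refine Finset.sum_congr rfl fun p _ => ?_
    obtain ⟨a, b⟩ := p
    show (if b < a then A (b, a) else 0) = if b < a then A (a, b) else 0
    rw [hA a b]
  have h3 : ∑ a, A (a, a) = ∑ p : Fin s × Fin s, if p.1 = p.2 then A p else 0 := by
    rw [Fintype.sum_prod_type]
    refine Finset.sum_congr rfl fun a _ => ?_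
    simp
  rw [two_mul, h1]
  nth_rewrite 2 [h2]
  rw [h3, ← Finset.sum_add_distrib, ← Finset.sum_add_distrib]
  refine Finset.sum_congr rfl fun p _ => ?_
  rcases lt_trichotomy p.1 p.2 with h | h | h
  · simp [h, h.ne, h.not_gt]
  · simp [h]
  · simp [h, h.ne', h.not_gt]

lemma card_off (s : ℕ) : s * s = s + 2 * Fintype.card (Off s) := by
  have := sum_sym (s := s) (fun _ => 1) (fun _ _ => rfl)
  simpa using this

def sumEqEquiv (ι : Type*) [Fintype ι] [DecidableEq ι] (k : ℕ) :
    {d : ι → ℕ // ∑ i, d i = k} ≃ {d // d ∈ piAntidiag (Finset.univ : Finset ι) k} :=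
  Equiv.subtypeEquivRight fun d => by simp

lemma card_sumEq (ι : Type*) [Fintype ι] [DecidableEq ι] (k : ℕ) :
    Nat.card {d : ι → ℕ // ∑ i, d i = k} = Nat.multichoose (Fintype.card ι) k := by
  have h := Finset.map_sym_eq_piAntidiag (Finset.univ : Finset ι) k
  have h2 : (piAntidiag (Finset.univ : Finset ι) k).card = Nat.multichoose (Fintype.card ι) k := by
    rw [← h, Finset.card_map, Finset.sym_univ, Finset.card_univ, Sym.card_sym_eq_multichoose]
  rw [← h2, Nat.card_congr (sumEqEquiv ι k), Nat.card_eq_fintype_card, Fintype.card_coe]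

instance finite_sumEq (ι : Type*) [Fintype ι] [DecidableEq ι] (k : ℕ) :
    Finite {d : ι → ℕ // ∑ i, d i = k} := Finite.of_equiv _ (sumEqEquiv ι k).symm

instance finite_twoSumEq (ι : Type*) [Fintype ι] [DecidableEq ι] (k : ℕ) :
    Finite {d : ι → ℕ // 2 * ∑ i, d i = k} := by
  apply Finite.of_injective (β := {d : ι → ℕ // ∑ i, d i = k / 2})
    (fun d => ⟨d.1, by have := d.2; omega⟩)
  intro a b h
  apply Subtype.ext
  simpa using h

noncomputable def evenMC (B i : ℕ) : ℕ := if Even i then Nat.multichoose B (i / 2) else 0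

lemma card_twoSumEq (ι : Type*) [Fintype ι] [DecidableEq ι] (k : ℕ) :
    Nat.card {d : ι → ℕ // 2 * ∑ i, d i = k} = evenMC (Fintype.card ι) k := by
  unfold evenMC
  split_ifs with h
  · obtain ⟨m, rfl⟩ := h
    rw [← card_sumEq]
    refine Nat.card_congr (Equiv.subtypeEquivRight fun d => ?_)
    omega
  · have : IsEmpty {d : ι → ℕ // 2 * ∑ i, d i = k} := by
      constructor
      rintro ⟨d, hd⟩
      exact h ⟨∑ i, d i, by omega⟩
    exact Nat.card_of_isEmpty

def symMatEquiv (n s : ℕ) : SymMat n s ≃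
    {x : (Fin s → ℕ) × (Off s → ℕ) // ∑ a, x.1 a + 2 * ∑ p, x.2 p = n} where
  toFun A := ⟨(fun a => A.1 (a, a), fun p => A.1 p.1), by
    exact (sum_sym A.1 A.2.1).symm.trans A.2.2⟩
  invFun x := ⟨fun p => if h : p.1 < p.2 then x.1.2 ⟨p, h⟩ else
      if h' : p.2 < p.1 then x.1.2 ⟨(p.2, p.1), h'⟩ else x.1.1 p.1, by
    have hs : ∀ a b : Fin s, (fun p : Fin s × Fin s => if h : p.1 < p.2 then x.1.2 ⟨p, h⟩ else
      if h' : p.2 < p.1 then x.1.2 ⟨(p.2, p.1), h'⟩ else x.1.1 p.1) (a, b) =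
      (fun p : Fin s × Fin s => if h : p.1 < p.2 then x.1.2 ⟨p, h⟩ else
      if h' : p.2 < p.1 then x.1.2 ⟨(p.2, p.1), h'⟩ else x.1.1 p.1) (b, a) := by
      intro a b
      rcases lt_trichotomy a b with h | h | h
      · simp [h, h.not_gt]
      · simp [h]
      · simp [h, h.not_gt]
    refine ⟨hs, ?_⟩
    rw [sum_sym _ hs]
    have hx := x.2
    simp only [lt_self_iff_false, dite_false]
    refine Eq.trans ?_ hx
    congr 2
    refine Finset.sum_congr rfl fun p _ => ?_
    simp [p.2]⟩
  left_inv A := by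
    apply Subtype.ext
    funext p
    obtain ⟨a, b⟩ := p
    simp only
    split_ifs with h1 h2
    · rfl
    · exact A.2.1 b a
    · have : a = b := le_antisymm (not_lt.1 h2) (not_lt.1 h1)
      rw [this]
  right_inv x := by
    apply Subtype.ext
    apply Prod.ext
    · funext a; simp
    · funext p; simp [p.2]

def pairEquiv (n s : ℕ) :
    {x : (Fin s → ℕ) × (Off s → ℕ) // ∑ a, x.1 a + 2 * ∑ p, x.2 p = n} ≃
    Σ ji : {ji // ji ∈ antidiagonal n}, {d : Fin s → ℕ // ∑ a, d a = ji.1.1} ×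
      {e : Off s → ℕ // 2 * ∑ p, e p = ji.1.2} where
  toFun x := ⟨⟨(∑ a, x.1.1 a, 2 * ∑ p, x.1.2 p), by simpa using x.2⟩, ⟨x.1.1, rfl⟩, ⟨x.1.2, rfl⟩⟩
  invFun y := ⟨(y.2.1.1, y.2.2.1), by
    have := mem_antidiagonal.1 y.1.2
    rw [y.2.1.2, y.2.2.2, this]⟩
  left_inv x := rfl
  right_inv y := by
    obtain ⟨⟨⟨j, i⟩, h⟩, ⟨d, hd⟩, ⟨e, he⟩⟩ := y
    simp only at hd he
    subst hd he
    rfl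

noncomputable def matCount (n s : ℕ) : ℕ :=
  ∑ ji ∈ antidiagonal n, Nat.multichoose s ji.1 * evenMC (Fintype.card (Off s)) ji.2

lemma card_symMat (n s : ℕ) : Nat.card (SymMat n s) = matCount n s := by
  rw [Nat.card_congr ((symMatEquiv n s).trans (pairEquiv n s)), Nat.card_sigma, matCount,
    ← Finset.sum_coe_sort (antidiagonal n)
      (fun ji => Nat.multichoose s ji.1 * evenMC (Fintype.card (Off s)) ji.2)]
  refine Finset.sum_congr rfl fun ji _ => ?_
  rw [Nat.card_prod, card_sumEq, card_twoSumEq, Fintype.card_fin]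

lemma sum_choose_eq (n s : ℕ) :
    ∑ π ∈ involutions (n+1), (s + n - descents π).choose (n+1) = matCount (n+1) s := by
  rw [← card_invWord_eq_sum, card_invWord, card_symMat]

/-! ### Recurrence and polynomial expansion -/

lemma succ_mul_multichoose (s j : ℕ) :
    (j + 1) * Nat.multichoose s (j+1) = (s + j) * Nat.multichoose s j := by
  rw [Nat.multichoose_eq, Nat.multichoose_eq]
  rcases Nat.eq_zero_or_pos (s + j) with h | h
  · have h1 : s = 0 := by omega
    have h2 : j = 0 := by omega
    subst h1 h2; simp
  · obtain ⟨m, hm⟩ : ∃ m, s + j = m + 1 := ⟨s + j - 1, by omega⟩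
    have e1 : s + (j + 1) - 1 = m + 1 := by omega
    have e2 : s + j - 1 = m := by omega
    rw [e1, e2, hm, Nat.add_one_mul_choose_eq, mul_comm]

open PowerSeries in
lemma matCount_rec (n s : ℕ) : ((n : ℝ) + 2) * matCount (n+2) s =
    s * matCount (n+1) s + ((s:ℝ)^2 + n) * matCount n s := by
  have hB : (s:ℝ) * s = s + 2 * (Fintype.card (Off s) : ℝ) := by exact_mod_cast card_off s
  set B := Fintype.card (Off s) with hBdef
  let P : PowerSeries ℝ := PowerSeries.mk fun j => (Nat.multichoose s j : ℝ)
  let R : PowerSeries ℝ := PowerSeries.mk fun i => (evenMC B i : ℝ)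
  have hX : ∀ (F : PowerSeries ℝ) (m : ℕ), coeff m (X * d⁄dX ℝ F) = m * coeff m F := by
    intro F m
    cases m with
    | zero => simp
    | succ m => rw [coeff_succ_X_mul, coeff_derivative]; push_cast; ring
  have hP : (1 - X) * d⁄dX ℝ P = C (s:ℝ) * P := by
    ext m
    rw [sub_mul, one_mul, map_sub, hX, coeff_derivative, coeff_C_mul]
    simp only [P, coeff_mk]
    have : ((m:ℝ) + 1) * Nat.multichoose s (m+1) = (s + m) * Nat.multichoose s m := by
      exact_mod_cast succ_mul_multichoose s m
    linarith
  have hR : (1 - X^2) * d⁄dX ℝ R = C ((s:ℝ)*(s-1)) * (X * R) := by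
    ext m
    rw [sub_mul, one_mul, map_sub, pow_two, mul_assoc, coeff_derivative, coeff_C_mul]
    cases m with
    | zero => simp [R, evenMC]
    | succ m =>
      rw [coeff_succ_X_mul, coeff_succ_X_mul, hX]
      simp only [R, coeff_mk, evenMC]
      by_cases h : Even m
      · have h2 : Even (m + 1 + 1) := by
          rw [add_assoc]; exact h.add (by decide)
        rw [if_pos h, if_pos h2]
        obtain ⟨i, rfl⟩ := h
        have e1 : (i + i + 1 + 1) / 2 = i + 1 := by omega
        have e2 : (i + i) / 2 = i := by omega
        rw [e1, e2]
        have h3 : ((i:ℝ) + 1) * Nat.multichoose B (i+1) = (B + i) * Nat.multichoose B i := by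
          exact_mod_cast succ_mul_multichoose B i
        push_cast
        have h4 : (s:ℝ) * (s - 1) = 2 * B := by linarith
        rw [h4]
        linarith
      · have h2 : ¬ Even (m + 1 + 1) := by
          rw [add_assoc, Nat.even_add]
          simp [h]
        rw [if_neg h, if_neg h2]
        simp
  have hG : (1 - X^2) * d⁄dX ℝ (P * R) = C (s:ℝ) * (P * R) + C ((s:ℝ)^2) * (X * (P * R)) := by
    rw [Derivation.leibniz, smul_eq_mul, smul_eq_mul]
    have e1 : (1 - X^2 : PowerSeries ℝ) * (P * d⁄dX ℝ R + R * d⁄dX ℝ P) =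
      P * ((1 - X^2) * d⁄dX ℝ R) + R * (1 + X) * ((1 - X) * d⁄dX ℝ P) := by ring
    rw [e1, hP, hR]
    have e2 : (C ((s:ℝ)*(s-1)) : PowerSeries ℝ) = C ((s:ℝ)^2) - C (s:ℝ) := by
      rw [← map_sub]; congr 1; ring
    rw [e2]; ring
  have hc : ∀ m, coeff m (P * R) = (matCount m s : ℝ) := by
    intro m
    rw [coeff_mul, matCount]
    push_cast
    refine Finset.sum_congr rfl fun p _ => ?_
    simp only [P, R, coeff_mk, hBdef]
  have := congrArg (coeff (n+1)) hG
  rw [sub_mul, one_mul, map_sub, map_add, pow_two, mul_assoc, coeff_succ_X_mul, hX,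
    coeff_derivative, coeff_C_mul, coeff_C_mul, coeff_succ_X_mul, hc, hc, hc] at this
  push_cast at this
  linarith

open Polynomial in
noncomputable def Qp : ℕ → Polynomial ℝ
  | 0 => 1
  | 1 => X
  | (n+2) => C (1/((n:ℝ)+2)) * (X * Qp (n+1) + (X^2 * Qp n + C (n:ℝ) * Qp n))

lemma matCount_eq_eval (n s : ℕ) : (matCount n s : ℝ) = (Qp n).eval (s:ℝ) := by
  induction n using Nat.strong_induction_on with
  | _ n ih =>
    match n, ih with
    | 0, _ => simp [Qp, matCount, evenMC]
    | 1, _ =>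
      have : (antidiagonal 1 : Finset (ℕ × ℕ)) = {(0,1),(1,0)} := by decide
      simp [Qp, matCount, evenMC, this]
    | n+2, ih =>
      have h := matCount_rec n s
      rw [ih (n+1) (by omega), ih n (by omega)] at h
      have hn : ((n:ℝ)+2) ≠ 0 := by positivity
      simp only [Qp, Polynomial.eval_mul, Polynomial.eval_add, Polynomial.eval_C,
        Polynomial.eval_X, Polynomial.eval_pow]
      field_simp
      linarith

noncomputable def cc (n k : ℕ) : ℝ := (Qp n).coeff k

lemma cc_rec (n k : ℕ) : ((n:ℝ)+2) * cc (n+2) k =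
    (if 1 ≤ k then cc (n+1) (k-1) else 0) + (if 2 ≤ k then cc n (k-2) else 0) + n * cc n k := by
  have hn : ((n:ℝ)+2) ≠ 0 := by positivity
  unfold cc
  rw [Qp, Polynomial.coeff_C_mul, Polynomial.coeff_add, Polynomial.coeff_add,
    Polynomial.coeff_C_mul, Polynomial.coeff_X_pow_mul']
  have : (Polynomial.X * Qp (n+1)).coeff k = if 1 ≤ k then (Qp (n+1)).coeff (k-1) else 0 := by
    have := Polynomial.coeff_X_pow_mul' (Qp (n+1)) 1 k
    simpa using this
  rw [this]
  field_simp
  ring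

lemma cc_zero (k : ℕ) : cc 0 k = if k = 0 then 1 else 0 := by
  simp [cc, Qp, Polynomial.coeff_one]

lemma cc_one (k : ℕ) : cc 1 k = if k = 1 then 1 else 0 := by
  simp [cc, Qp, Polynomial.coeff_X, eq_comm]

lemma cc_props (n : ℕ) : ∀ k, 0 ≤ cc n k ∧ (n < k → cc n k = 0) := by
  induction n using Nat.strong_induction_on with
  | _ n ih =>
    match n, ih with
    | 0, _ => intro k; rw [cc_zero]; constructor
              · split_ifs <;> norm_num
              · intro h; rw [if_neg (by omega)]
    | 1, _ => intro k; rw [cc_one]; constructor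
              · split_ifs <;> norm_num
              · intro h; rw [if_neg (by omega)]
    | n+2, ih =>
      intro k
      have h := cc_rec n k
      have hn : (0:ℝ) < (n:ℝ)+2 := by positivity
      constructor
      · have : 0 ≤ ((n:ℝ)+2) * cc (n+2) k := by
          rw [h]
          have h1 := (ih (n+1) (by omega) (k-1)).1
          have h2 := (ih n (by omega) (k-2)).1
          have h3 := (ih n (by omega) k).1
          split_ifs <;> positivity
        exact nonneg_of_mul_nonneg_right this hn
      · intro hk
        rw [if_pos (by omega), if_pos (by omega), (ih (n+1) (by omega) (k-1)).2 (by omega),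
          (ih n (by omega) (k-2)).2 (by omega), (ih n (by omega) k).2 (by omega)] at h
        simp only [add_zero, mul_zero, mul_eq_zero] at h
        rcases h with h | h
        · exact absurd h hn.ne'
        · exact h

lemma cc_const (n : ℕ) : cc (n+1) 0 = 0 := by
  induction n using Nat.strong_induction_on with
  | _ n ih =>
    match n, ih with
    | 0, _ => simp [cc_one]
    | n+1, ih =>
      have h := cc_rec n 0
      have hn : (0:ℝ) < (n:ℝ)+2 := by positivity
      rcases n with _ | n
      · simp at h; simpa using h
      · rw [ih n (by omega)] at h
        simp only [mul_zero, nonpos_iff_eq_zero, one_ne_zero, OfNat.ofNat_ne_zero, if_false,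
          add_zero, mul_eq_zero] at h
        rcases h with h | h
        · exact absurd h hn.ne'
        · exact h

noncomputable def tt (n : ℕ) : ℝ := (n.factorial : ℝ) * cc n n

lemma tt_rec (n : ℕ) : tt (n+2) = tt (n+1) + (n+1) * tt n := by
  unfold tt
  have h := cc_rec n (n+2)
  rw [if_pos (by omega), if_pos (by omega), (cc_props n (n+2)).2 (by omega)] at h
  have e : n + 2 - 1 = n + 1 := by omega
  rw [e, Nat.add_sub_cancel] at h
  rw [Nat.factorial_succ (n+1), Nat.factorial_succ n]
  push_cast
  linear_combination (((n:ℝ)+1) * n.factorial) * h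

lemma tt_pos (n : ℕ) : 0 < tt n := by
  induction n using Nat.strong_induction_on with
  | _ n ih =>
    match n, ih with
    | 0, _ => simp [tt, cc_zero]
    | 1, _ => simp [tt, cc_one]
    | n+2, ih =>
      rw [tt_rec]
      have h1 := ih (n+1) (by omega)
      have h2 := ih n (by omega)
      positivity

noncomputable def bt : ℕ → ℝ
  | 0 => 1
  | 1 => 0
  | (j+2) => bt j / ((j:ℝ)+2)

lemma bt_nonneg (j : ℕ) : 0 ≤ bt j := by
  induction j using Nat.strong_induction_on with
  | _ j ih =>
    match j, ih with
    | 0, _ => simp [bt]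
    | 1, _ => simp [bt]
    | j+2, ih =>
      have := ih j (by omega)
      rw [bt]; positivity

lemma cc_bound (n : ℕ) : ∀ k j, k + j = n → (k.factorial : ℝ) * cc n k ≤ bt j * tt n := by
  induction n using Nat.strong_induction_on with
  | _ n ih =>
    match n, ih with
    | 0, _ =>
      intro k j h
      have hk : k = 0 := by omega
      have hj : j = 0 := by omega
      subst hk hj; simp [bt, tt]
    | 1, _ =>
      intro k j h
      rcases Nat.eq_zero_or_pos j with hj | hj
      · have hk : k = 1 := by omega
        subst hk hj; simp [bt, tt]
      · have hk : k = 0 := by omega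
        have hj : j = 1 := by omega
        subst hk hj; simp [bt, cc_one]
    | n+2, ih =>
      intro k j h
      have hn : (0:ℝ) < (n:ℝ)+2 := by positivity
      have hr := cc_rec n k
      have ht1 := tt_pos (n+1)
      have ht0 := tt_pos n
      have hb := bt_nonneg j
      have hkj : (k:ℝ) = n + 2 - j := by
        have : (k:ℝ) + j = n + 2 := by exact_mod_cast h
        linarith
      -- three terms
      have h1 : (k.factorial : ℝ) * (if 1 ≤ k then cc (n+1) (k-1) else 0) ≤ k * (bt j * tt (n+1)) := by
        rcases k with _ | k
        · simp
        · rw [if_pos (by omega), Nat.add_sub_cancel, Nat.factorial_succ]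
          have := ih (n+1) (by omega) k j (by omega)
          push_cast
          have hk : (0:ℝ) ≤ (k:ℝ)+1 := by positivity
          nlinarith [mul_le_mul_of_nonneg_left this hk]
      have h2 : (k.factorial : ℝ) * (if 2 ≤ k then cc n (k-2) else 0)
          ≤ k * (k - 1) * (bt j * tt n) := by
        rcases k with _ | _ | k
        · simp
        · simp
        · have e : k+1+1-2 = k := by omega
          rw [if_pos (by omega), e, Nat.factorial_succ, Nat.factorial_succ]
          have := ih n (by omega) k j (by omega)
          push_cast
          have hk : (0:ℝ) ≤ ((k:ℝ)+1+1) * (k + 1) := by positivity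
          nlinarith [mul_le_mul_of_nonneg_left this hk]
      have h3 : (k.factorial : ℝ) * cc n k ≤ j * bt j * tt n := by
        rcases j with _ | _ | j
        · rw [(cc_props n k).2 (by omega)]; simp
        · rw [(cc_props n k).2 (by omega)]; simp [bt]
        · have := ih n (by omega) k j (by omega)
          refine this.trans (le_of_eq ?_)
          rw [bt]
          push_cast
          have : ((j:ℝ)+1+1) ≠ 0 := by positivity
          have : ((j:ℝ)+2) ≠ 0 := by positivity
          field_simp
          ring
      have h4 : ((n:ℝ)+2) * ((k.factorial : ℝ) * cc (n+2) k) ≤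
          k * (bt j * tt (n+1)) + k * (k - 1) * (bt j * tt n) + n * (j * bt j * tt n) := by
        have : ((n:ℝ)+2) * ((k.factorial : ℝ) * cc (n+2) k) =
          (k.factorial : ℝ) * (((n:ℝ)+2) * cc (n+2) k) := by ring
        rw [this, hr]
        have h5 := mul_le_mul_of_nonneg_left h3 (Nat.cast_nonneg (α := ℝ) n)
        linarith
      have h6 : k * (bt j * tt (n+1)) + k * (k - 1) * (bt j * tt n) + n * (j * bt j * tt n)
          ≤ ((n:ℝ)+2) * (bt j * tt (n+2)) := by
        rw [tt_rec]
        have hjk : (0:ℝ) ≤ j := Nat.cast_nonneg j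
        have hk0 : (0:ℝ) ≤ k := Nat.cast_nonneg k
        have e : ((n:ℝ)+2) * (bt j * (tt (n+1) + (n+1) * tt n)) -
          (k * (bt j * tt (n+1)) + k * (k - 1) * (bt j * tt n) + n * (j * bt j * tt n)) =
          j * (bt j * tt (n+1)) + j * (k + 1) * (bt j * tt n) := by
          rw [hkj]; ring
        have : 0 ≤ j * (bt j * tt (n+1)) + j * (k + 1) * (bt j * tt n) := by positivity
        linarith
      exact le_of_mul_le_mul_left (h4.trans h6) hn

lemma cc_sub_one (n : ℕ) : cc (n+1) n = 0 := by
  have h := cc_bound (n+1) n 1 rfl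
  simp only [bt, zero_mul] at h
  have h1 := (cc_props (n+1) n).1
  have h2 : (0:ℝ) < n.factorial := by positivity
  nlinarith [mul_nonneg h2.le h1, nonpos_of_mul_nonpos_right h h2]

lemma bt_decay : ∃ K : ℝ, 0 < K ∧ ∀ j, bt j * 8^j ≤ K := by
  refine ⟨1 + ∑ i ∈ range 64, bt i * 8^i, ?_, ?_⟩
  · have : 0 ≤ ∑ i ∈ range 64, bt i * 8^i :=
      Finset.sum_nonneg fun i _ => mul_nonneg (bt_nonneg i) (by positivity)
    linarith
  · intro j
    induction j using Nat.strong_induction_on with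
    | _ j ih =>
      by_cases hj : j < 64
      · have := Finset.single_le_sum (f := fun i => bt i * 8^i)
          (fun i _ => mul_nonneg (bt_nonneg i) (by positivity)) (mem_range.2 hj)
        linarith
      · obtain ⟨i, rfl⟩ : ∃ i, j = i + 2 := ⟨j - 2, by omega⟩
        refine le_trans ?_ (ih i (by omega))
        rw [bt, pow_add]
        have h1 : (62:ℝ) ≤ i := by exact_mod_cast (by omega : 62 ≤ i)
        have h2 := mul_nonneg (bt_nonneg i) (by positivity : (0:ℝ) ≤ 8^i)
        rw [div_mul_eq_mul_div, div_le_iff₀ (by linarith)]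
        nlinarith

/-! ### Averaging operators -/

noncomputable def Wop (ω g : ℝ → ℝ) (x : ℝ) : ℝ := ∫ u in (-1/2:ℝ)..(1/2), ω u * g (x + u)

noncomputable def Tav : (ℝ → ℝ) → ℝ → ℝ := Wop fun _ => 1

noncomputable def kap (u : ℝ) : ℝ := 6 * (1/4 - u^2)

lemma kap_cont : Continuous kap := by unfold kap; fun_prop

lemma kap_nonneg {u : ℝ} (hu : u ∈ Set.Icc (-1/2:ℝ) (1/2)) : 0 ≤ kap u := by
  unfold kap; nlinarith [hu.1, hu.2]

lemma kap_int : ∫ u in (-1/2:ℝ)..(1/2), kap u = 1 := by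
  unfold kap
  rw [intervalIntegral.integral_const_mul, intervalIntegral.integral_sub (by simp)
    ((continuous_pow 2).intervalIntegrable _ _), integral_pow]
  simp
  norm_num

lemma Wop_cont {ω g : ℝ → ℝ} (hω : Continuous ω) (hg : Continuous g) : Continuous (Wop ω g) := by
  unfold Wop
  apply intervalIntegral.continuous_parametric_intervalIntegral_of_continuous'
  fun_prop

lemma Wop_comm {ω ρ g : ℝ → ℝ} (hω : Continuous ω) (hρ : Continuous ρ) (hg : Continuous g) :
    Wop ω (Wop ρ g) = Wop ρ (Wop ω g) := by
  funext x
  simp only [Wop, ← intervalIntegral.integral_const_mul]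
  rw [MeasureTheory.intervalIntegral_intervalIntegral_swap]
  · refine intervalIntegral.integral_congr fun u _ => ?_
    refine intervalIntegral.integral_congr fun v _ => ?_
    rw [show x + v + u = x + u + v by ring]; ring
  · have hc : Continuous (Function.uncurry fun u v => ω u * (ρ v * g (x + u + v))) := by
      unfold Function.uncurry; fun_prop
    have := hc.continuousOn.integrableOn_compact (μ := MeasureTheory.volume)
      ((isCompact_uIcc (a := (-1/2:ℝ)) (b := 1/2)).prod (isCompact_uIcc (a := (-1/2:ℝ)) (b := 1/2)))
    exact this.mono_set (Set.prod_mono Set.uIoc_subset_uIcc Set.uIoc_subset_uIcc)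

lemma Wop_mono {ω g g' : ℝ → ℝ} (hω : Continuous ω) (h0 : ∀ u ∈ Set.Icc (-1/2:ℝ) (1/2), 0 ≤ ω u)
    (hg : Continuous g) (hg' : Continuous g') (x : ℝ)
    (h : ∀ u ∈ Set.Icc (-1/2:ℝ) (1/2), g (x + u) ≤ g' (x + u)) :
    Wop ω g x ≤ Wop ω g' x := by
  unfold Wop
  apply intervalIntegral.integral_mono_on (by norm_num)
  · exact Continuous.intervalIntegrable (by fun_prop) _ _
  · exact Continuous.intervalIntegrable (by fun_prop) _ _
  · intro u hu
    exact mul_le_mul_of_nonneg_left (h u hu) (h0 u hu)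

lemma Wop_add {ω g g' : ℝ → ℝ} (hω : Continuous ω) (hg : Continuous g) (hg' : Continuous g') :
    Wop ω (fun x => g x + g' x) = fun x => Wop ω g x + Wop ω g' x := by
  funext x
  unfold Wop
  rw [← intervalIntegral.integral_add]
  · refine intervalIntegral.integral_congr fun u _ => ?_
    simp only; ring
  · exact Continuous.intervalIntegrable (by fun_prop) _ _
  · exact Continuous.intervalIntegrable (by fun_prop) _ _

lemma Wop_smul {ω g : ℝ → ℝ} (c : ℝ) :
    Wop ω (fun x => c * g x) = fun x => c * Wop ω g x := by
  funext x
  unfold Wop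
  rw [← intervalIntegral.integral_const_mul]
  refine intervalIntegral.integral_congr fun u _ => ?_
  simp only; ring

lemma Tav_cont {g : ℝ → ℝ} (hg : Continuous g) : Continuous (Tav g) :=
  Wop_cont continuous_const hg

lemma Tav_eq (g : ℝ → ℝ) (x : ℝ) : Tav g x = ∫ u in (-1/2:ℝ)..(1/2), g (x + u) := by
  simp [Tav, Wop]

lemma Tav_const (c : ℝ) : Tav (fun _ => c) = fun _ => c := by
  funext x; rw [Tav_eq]; simp; ring

lemma kap_const (c : ℝ) : Wop kap (fun _ => c) = fun _ => c := by
  funext x; unfold Wop; rw [intervalIntegral.integral_mul_const, kap_int, one_mul]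

lemma Tit_cont (m : ℕ) : ∀ {g : ℝ → ℝ}, Continuous g → Continuous (Tav^[m] g) := by
  induction m with
  | zero => intro g hg; simpa using hg
  | succ m ih => intro g hg; rw [Function.iterate_succ_apply]; exact ih (Tav_cont hg)

lemma Tit_mono (m : ℕ) : ∀ {g g' : ℝ → ℝ}, Continuous g → Continuous g' → (∀ x, g x ≤ g' x) →
    ∀ x, Tav^[m] g x ≤ Tav^[m] g' x := by
  induction m with
  | zero => intro g g' _ _ h; simpa using h
  | succ m ih =>
    intro g g' hg hg' h
    simp only [Function.iterate_succ_apply]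
    exact ih (Tav_cont hg) (Tav_cont hg')
      fun x => Wop_mono continuous_const (by simp) hg hg' x fun u _ => h _

lemma Tit_add (m : ℕ) : ∀ {g g' : ℝ → ℝ}, Continuous g → Continuous g' →
    Tav^[m] (fun x => g x + g' x) = fun x => Tav^[m] g x + Tav^[m] g' x := by
  induction m with
  | zero => intro g g' _ _; simp
  | succ m ih =>
    intro g g' hg hg'
    simp only [Function.iterate_succ_apply]
    rw [← ih (Tav_cont hg) (Tav_cont hg')]
    congr 1
    exact Wop_add continuous_const hg hg'

lemma Tit_smul (m : ℕ) : ∀ {g : ℝ → ℝ} (c : ℝ),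
    Tav^[m] (fun x => c * g x) = fun x => c * Tav^[m] g x := by
  induction m with
  | zero => intro g c; simp
  | succ m ih =>
    intro g c
    simp only [Function.iterate_succ_apply]
    rw [← ih]
    congr 1
    exact Wop_smul c

lemma Tit_const (m : ℕ) (c : ℝ) : Tav^[m] (fun _ => c) = fun _ => c := by
  induction m with
  | zero => rfl
  | succ m ih => rw [Function.iterate_succ_apply, Tav_const, ih]

lemma Tit_shift (m : ℕ) : ∀ (g : ℝ → ℝ) (a : ℝ),
    Tav^[m] (fun w => g (w + a)) = fun x => Tav^[m] g (x + a) := by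
  induction m with
  | zero => intro g a; rfl
  | succ m ih =>
    intro g a
    simp only [Function.iterate_succ_apply]
    rw [← ih]
    congr 1
    funext x
    rw [Tav_eq, Tav_eq]
    refine intervalIntegral.integral_congr fun u _ => ?_
    rw [add_right_comm]

lemma Tav_eq' {g : ℝ → ℝ} (x : ℝ) : Tav g x = ∫ u in (x - 1/2)..(x + 1/2), g u := by
  rw [Tav_eq, intervalIntegral.integral_comp_add_left]
  congr 1; ring

lemma Tav_hasDeriv {f f' : ℝ → ℝ} (hf : ∀ x, HasDerivAt f (f' x) x) (hf' : Continuous f') (x : ℝ) :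
    HasDerivAt (Tav f) (Tav f' x) x := by
  have hc : Continuous f := continuous_iff_continuousAt.2 fun x => (hf x).continuousAt
  have e : Tav f = fun x => (∫ u in (0:ℝ)..(x + 1/2), f u) - ∫ u in (0:ℝ)..(x - 1/2), f u := by
    funext x
    rw [Tav_eq', intervalIntegral.integral_interval_sub_left]
    · exact hc.intervalIntegrable _ _
    · exact hc.intervalIntegrable _ _
  have e2 : Tav f' x = f (x + 1/2) - f (x - 1/2) := by
    rw [Tav_eq', intervalIntegral.integral_eq_sub_of_hasDerivAt (fun u _ => hf u)
      (hf'.intervalIntegrable _ _)]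
  rw [e, e2]
  have h1 : ∀ y, HasDerivAt (fun x => ∫ u in (0:ℝ)..x, f u) (f y) y := fun y =>
    intervalIntegral.integral_hasDerivAt_right (hc.intervalIntegrable _ _)
      (hc.stronglyMeasurableAtFilter _ _) hc.continuousAt
  exact ((h1 (x + 1/2)).comp_add_const x (1/2)).sub ((h1 (x - 1/2)).comp_sub_const x (1/2))

lemma Tav_mul_id {f f' : ℝ → ℝ} (hf : ∀ x, HasDerivAt f (f' x) x) (hf' : Continuous f') :
    Tav (fun w => w * f w) = fun x => x * Tav f x + (1/12) * Wop kap f' x := by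
  have hc : Continuous f := continuous_iff_continuousAt.2 fun x => (hf x).continuousAt
  funext x
  have h1 : ∫ u in (-1/2:ℝ)..(1/2), f (x + u) * u =
      (1/12) * Wop kap f' x := by
    have := intervalIntegral.integral_mul_deriv_eq_deriv_mul (a := (-1/2:ℝ)) (b := 1/2)
      (u := fun u => f (x + u)) (u' := fun u => f' (x + u))
      (v := fun u => -(1/4 - u^2)/2) (v' := fun u => u)
      (fun u _ => (hf (x + u)).comp_const_add x u)
      (fun u _ => by
        have := ((((hasDerivAt_id u).pow 2).const_sub (1/4)).neg).div_const 2
        convert this using 1 <;> simp)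
      (Continuous.intervalIntegrable (by fun_prop) _ _)
      (Continuous.intervalIntegrable (by fun_prop) _ _)
    rw [this]
    unfold Wop kap
    rw [← intervalIntegral.integral_const_mul]
    have z1 : -(1/4 - (1/2:ℝ)^2)/2 = 0 := by norm_num
    have z2 : -(1/4 - (-1/2:ℝ)^2)/2 = 0 := by norm_num
    rw [z1, z2, mul_zero, mul_zero, sub_zero, zero_sub, ← intervalIntegral.integral_neg]
    refine intervalIntegral.integral_congr fun u _ => ?_
    ring
  rw [← h1, Tav_eq, Tav_eq, ← intervalIntegral.integral_const_mul, ← intervalIntegral.integral_add]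
  · refine intervalIntegral.integral_congr fun u _ => ?_
    ring
  · exact Continuous.intervalIntegrable (by fun_prop) _ _
  · exact Continuous.intervalIntegrable (by fun_prop) _ _

lemma Tit_mul_id (n : ℕ) : ∀ {f f' : ℝ → ℝ}, (∀ x, HasDerivAt f (f' x) x) → Continuous f' → ∀ x,
    Tav^[n+1] (fun w => w * f w) x = x * Tav^[n+1] f x + ((n:ℝ)+1)/12 * Tav^[n] (Wop kap f') x := by
  induction n with
  | zero =>
    intro f f' hf hf' x
    simp [Tav_mul_id hf hf']
  | succ n ih =>
    intro f f' hf hf' x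
    have hc : Continuous f := continuous_iff_continuousAt.2 fun x => (hf x).continuousAt
    have hk := Wop_cont kap_cont hf'
    rw [Function.iterate_succ_apply, Tav_mul_id hf hf',
      Tit_add (n+1) (by have := Tav_cont hc; fun_prop) (by fun_prop), Tit_smul]
    simp only
    rw [ih (Tav_hasDeriv hf hf') (Tav_cont hf')]
    have : Wop kap (Tav f') = Tav (Wop kap f') := Wop_comm kap_cont continuous_const hf'
    rw [this, ← Function.iterate_succ_apply, ← Function.iterate_succ_apply]
    push_cast
    ring

/-! ### Gaussian facts and the Stein equation -/

open MeasureTheory Set in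
lemma gE_integrable : Integrable (fun t : ℝ => Real.exp (-(t^2)/2)) := by
  have := integrable_exp_neg_mul_sq (b := 1/2) (by norm_num)
  refine this.congr (Filter.Eventually.of_forall fun t => ?_)
  simp only; congr 1; ring

lemma gE_cont : Continuous (fun t : ℝ => Real.exp (-(t^2)/2)) := by fun_prop

open MeasureTheory Set in
lemma gE_integral : ∫ t : ℝ, Real.exp (-(t^2)/2) = Real.sqrt (2 * Real.pi) := by
  have := integral_gaussian (1/2)
  rw [show Real.pi / (1/2) = 2 * Real.pi by ring] at this
  rw [← this]
  congr 1; funext t; congr 1; ring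

open MeasureTheory Set in
lemma gE_Ioi (y : ℝ) : ∫ t in Ioi y, Real.exp (-(t^2)/2) = ∫ t in Iic (-y), Real.exp (-(t^2)/2) := by
  have := integral_comp_neg_Iic (-y) (fun t : ℝ => Real.exp (-(t^2)/2))
  rw [neg_neg] at this
  rw [← this]
  simp

lemma gE_hasDeriv (t : ℝ) : HasDerivAt (fun t : ℝ => Real.exp (-(t^2)/2))
    (-t * Real.exp (-(t^2)/2)) t := by
  have h := (((hasDerivAt_pow 2 t).fun_neg).div_const 2).exp
  convert h using 1
  push_cast; ring

open MeasureTheory Set in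
lemma gE_tail {y : ℝ} (hy : y ≤ 0) :
    |y| * ∫ t in Iic y, Real.exp (-(t^2)/2) ≤ Real.exp (-(y^2)/2) := by
  have hi : Integrable (fun t : ℝ => -t * Real.exp (-(t^2)/2)) := by
    have := (integrable_mul_exp_neg_mul_sq (b := 1/2) (by norm_num)).neg
    refine this.congr (Filter.Eventually.of_forall fun t => ?_)
    simp only [Pi.neg_apply, neg_mul]; congr 3; ring
  have ht : Filter.Tendsto (fun t : ℝ => Real.exp (-(t^2)/2)) Filter.atBot (nhds 0) := by
    apply Real.tendsto_exp_atBot.comp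
    apply Filter.Tendsto.atBot_div_const (by norm_num)
    apply Filter.tendsto_neg_atTop_atBot.comp
    have h2 := (Filter.tendsto_pow_atTop (α := ℝ) two_ne_zero).comp Filter.tendsto_neg_atBot_atTop
    refine h2.congr fun t => ?_
    simp
  have h := integral_Iic_of_hasDerivAt_of_tendsto' (a := y) (fun t _ => gE_hasDeriv t)
    hi.integrableOn ht
  rw [sub_zero] at h
  rw [← h, ← integral_const_mul]
  apply setIntegral_mono_on (gE_integrable.const_mul _).integrableOn hi.integrableOn measurableSet_Iic
  intro t ht
  apply mul_le_mul_of_nonneg_right _ (Real.exp_pos _).le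
  rw [abs_of_nonpos hy]
  exact neg_le_neg ht

noncomputable def Ng (h : ℝ → ℝ) : ℝ :=
  (Real.sqrt (2 * Real.pi))⁻¹ * ∫ t, h t * Real.exp (-(t^2)/2)

open MeasureTheory Set in
lemma hE_integrable {h : ℝ → ℝ} (hc : Continuous h) {c : ℝ} (hb : ∀ t, |h t| ≤ c) :
    Integrable (fun t => h t * Real.exp (-(t^2)/2)) :=
  gE_integrable.bdd_mul hc.aestronglyMeasurable (Filter.Eventually.of_forall hb)

open MeasureTheory Set in
lemma Ng_mem {h : ℝ → ℝ} (hc : Continuous h) (h0 : ∀ t, 0 ≤ h t) (h1 : ∀ t, h t ≤ 1) :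
    0 ≤ Ng h ∧ Ng h ≤ 1 := by
  have hp : 0 < Real.sqrt (2 * Real.pi) := by positivity
  constructor
  · unfold Ng
    apply mul_nonneg (by positivity)
    exact integral_nonneg fun t => mul_nonneg (h0 t) (Real.exp_pos _).le
  · unfold Ng
    have : ∫ t, h t * Real.exp (-(t^2)/2) ≤ ∫ t : ℝ, Real.exp (-(t^2)/2) :=
      integral_mono (hE_integrable hc (c := 1) fun t => by rw [abs_of_nonneg (h0 t)]; exact h1 t)
        gE_integrable fun t => by
          have := mul_le_mul_of_nonneg_right (h1 t) (Real.exp_pos (-(t^2)/2)).le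
          simpa using this
    rw [gE_integral] at this
    rw [inv_mul_le_iff₀ hp]; linarith

open MeasureTheory Set in
lemma stein {h : ℝ → ℝ} (hc : Continuous h) (h0 : ∀ t, 0 ≤ h t) (h1 : ∀ t, h t ≤ 1) :
    ∃ f : ℝ → ℝ, (∀ y, HasDerivAt f (y * f y + h y - Ng h) y) ∧ (∀ y, |y * f y| ≤ 1) ∧
      ∀ y, |f y| ≤ 5 := by
  obtain ⟨hN0, hN1⟩ := Ng_mem hc h0 h1
  have hp : 0 < Real.sqrt (2 * Real.pi) := by positivity
  set k : ℝ → ℝ := fun t => h t - Ng h with hk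
  have kc : Continuous k := by fun_prop
  have kb : ∀ t, |k t| ≤ 1 := fun t => by
    rw [abs_le]; constructor <;> simp only [hk] <;> linarith [h0 t, h1 t]
  set E : ℝ → ℝ := fun t => Real.exp (-(t^2)/2) with hE
  have Epos : ∀ t, 0 < E t := fun t => Real.exp_pos _
  have Ec : Continuous E := gE_cont
  have kEi : Integrable (fun t => k t * E t) := hE_integrable kc kb
  have ktot : ∫ t, k t * E t = 0 := by
    have hi := hE_integrable hc (c := 1) fun t => by rw [abs_of_nonneg (h0 t)]; exact h1 t
    simp only [hk, sub_mul]
    rw [integral_sub hi (gE_integrable.const_mul _), integral_const_mul, gE_integral]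
    unfold Ng
    field_simp
    ring
  set J : ℝ → ℝ := fun y => ∫ t in Iic y, k t * E t with hJ
  have Jd : ∀ y, HasDerivAt J (k y * E y) y := by
    intro y
    have e : J = fun y => J 0 + ∫ t in (0:ℝ)..y, k t * E t := by
      funext z
      have := intervalIntegral.integral_Iic_sub_Iic (a := 0) (b := z) (f := fun t => k t * E t)
        kEi.integrableOn kEi.integrableOn
      simp only [hJ]; linarith
    rw [e]
    apply HasDerivAt.const_add
    have hcc : Continuous (fun t => k t * E t) := by fun_prop
    exact intervalIntegral.integral_hasDerivAt_right (hcc.intervalIntegrable _ _)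
      (hcc.stronglyMeasurableAtFilter _ _) hcc.continuousAt
  have bnd : ∀ s : Set ℝ, MeasurableSet s → |∫ t in s, k t * E t| ≤ ∫ t in s, E t := by
    intro s hs
    refine (abs_integral_le_integral_abs).trans ?_
    apply setIntegral_mono_on kEi.abs.integrableOn gE_integrable.integrableOn hs
    intro t _
    rw [abs_mul, abs_of_pos (Epos t)]
    have := mul_le_mul_of_nonneg_right (kb t) (Epos t).le
    simpa using this
  have Jb : ∀ y, |y| * |J y| ≤ E y := by
    intro y
    rcases le_total y 0 with hy | hy
    · exact (mul_le_mul_of_nonneg_left (bnd _ measurableSet_Iic) (abs_nonneg y)).trans (gE_tail hy)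
    · have e : J y = - ∫ t in Ioi y, k t * E t := by
        have := intervalIntegral.integral_Iic_add_Ioi (b := y) (f := fun t => k t * E t)
          kEi.integrableOn kEi.integrableOn
        rw [ktot] at this
        simp only [hJ]; linarith
      rw [e, abs_neg]
      refine (mul_le_mul_of_nonneg_left (bnd _ measurableSet_Ioi) (abs_nonneg y)).trans ?_
      have h2 := gE_tail (y := -y) (by linarith)
      rw [abs_neg, ← gE_Ioi, neg_sq] at h2
      exact h2
  have Jb2 : ∀ y, |J y| ≤ Real.sqrt (2 * Real.pi) := by
    intro y
    refine (bnd _ measurableSet_Iic).trans ?_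
    rw [← gE_integral]
    exact setIntegral_le_integral gE_integrable (Filter.Eventually.of_forall fun t => (Epos t).le)
  have inv : ∀ y, Real.exp (y^2/2) * E y = 1 := fun y => by
    simp only [hE]
    rw [← Real.exp_add]; simp; ring
  have yf : ∀ y, |y * (Real.exp (y^2/2) * J y)| ≤ 1 := by
    intro y
    rw [abs_mul, abs_mul, abs_of_pos (Real.exp_pos _)]
    have := mul_le_mul_of_nonneg_left (Jb y) (Real.exp_pos (y^2/2)).le
    rw [inv] at this
    linarith
  refine ⟨fun y => Real.exp (y^2/2) * J y, ?_, yf, ?_⟩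
  · intro y
    have h3 : HasDerivAt (fun y : ℝ => Real.exp (y^2/2)) (y * Real.exp (y^2/2)) y := by
      have h := ((hasDerivAt_pow 2 y).div_const 2).exp
      convert h using 1
      push_cast; ring
    refine (h3.mul (Jd y)).congr_deriv ?_
    have := inv y
    simp only [hk]
    linear_combination (h y - Ng h) * this
  · intro y
    by_cases hy : 1 ≤ |y|
    · have := yf y
      rw [abs_mul] at this
      nlinarith [abs_nonneg (Real.exp (y^2/2) * J y)]
    · push Not at hy
      have hy2 : y^2/2 ≤ 1/2 := by
        have : y^2 ≤ 1 := by rw [← sq_abs]; nlinarith [abs_nonneg y]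
        linarith
      have e1 : Real.exp (y^2/2) ≤ 1.75 := by
        refine (Real.exp_le_exp.2 hy2).trans ?_
        have h5 : Real.exp (1/2) * Real.exp (1/2) = Real.exp 1 := by rw [← Real.exp_add]; norm_num
        have h6 := Real.exp_one_lt_d9
        nlinarith [Real.exp_pos (1/2)]
      have e2 : Real.sqrt (2 * Real.pi) ≤ 2.6 := by
        rw [Real.sqrt_le_left (by norm_num)]
        have := Real.pi_lt_d2
        nlinarith
      rw [abs_mul, abs_of_pos (Real.exp_pos _)]
      calc _ ≤ 1.75 * 2.6 := mul_le_mul e1 ((Jb2 y).trans e2) (abs_nonneg _) (by norm_num)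
        _ ≤ 5 := by norm_num

/-! ### Berry–Esseen for Irwin–Hall -/

lemma Tit_sq (m : ℕ) : ∀ (α β x : ℝ),
    Tav^[m] (fun v => α + β * v^2) x = α + β * x^2 + β * m / 12 := by
  induction m with
  | zero => intro α β x; simp
  | succ m ih =>
    intro α β x
    have : Tav (fun v => α + β * v^2) = fun v => (α + β / 12) + β * v^2 := by
      funext v
      rw [Tav_eq', intervalIntegral.integral_add (by simp)
        (Continuous.intervalIntegrable (by fun_prop) _ _), intervalIntegral.integral_const_mul,
        integral_pow]
      simp
      ring
    rw [Function.iterate_succ_apply, this, ih]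
    push_cast; ring

lemma Wop_near {ω g : ℝ → ℝ} (hω : Continuous ω)
    (h0 : ∀ u ∈ Set.Icc (-1/2:ℝ) (1/2), 0 ≤ ω u) (hg : Continuous g)
    (hc : ∀ c : ℝ, Wop ω (fun _ => c) = fun _ => c) {v a b : ℝ}
    (ha : ∀ u ∈ Set.Icc (-1/2:ℝ) (1/2), a ≤ g (v + u))
    (hb : ∀ u ∈ Set.Icc (-1/2:ℝ) (1/2), g (v + u) ≤ b) :
    a ≤ Wop ω g v ∧ Wop ω g v ≤ b := by
  have h1 := Wop_mono hω h0 continuous_const hg v (g := fun _ => a) ha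
  have h2 := Wop_mono hω h0 hg continuous_const v (g' := fun _ => b) hb
  rw [hc] at h1 h2
  exact ⟨h1, h2⟩

lemma be1 (n : ℕ) {σ : ℝ} (hσ : 0 < σ) (hs : σ^2 = ((n:ℝ)+1)/12) {h : ℝ → ℝ}
    (hc : Continuous h) (h0 : ∀ t, 0 ≤ h t) (h1 : ∀ t, h t ≤ 1) :
    |Tav^[n] (Wop kap h) 0 - Ng (fun t => h (σ * t))| ≤ 12 / σ := by
  have hcσ : Continuous (fun t => h (σ * t)) := by fun_prop
  obtain ⟨f, fd, yf, fb⟩ := stein hcσ (fun t => h0 _) (fun t => h1 _)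
  obtain ⟨N0, N1⟩ := Ng_mem hcσ (fun t => h0 _) (fun t => h1 _)
  set N := Ng (fun t => h (σ * t)) with hN
  have fc : Continuous f := continuous_iff_continuousAt.2 fun x => (fd x).continuousAt
  set φ : ℝ → ℝ := fun w => f (w / σ) / σ with hφ
  set φ' : ℝ → ℝ := fun w => (w / σ * f (w/σ) + h w - N) / σ^2 with hφ'
  have φd : ∀ w, HasDerivAt φ (φ' w) w := by
    intro w
    have h2 : HasDerivAt (fun w => w / σ) (1/σ) w := (hasDerivAt_id w).div_const σ
    have h3 := ((fd (w/σ)).comp w h2).div_const σ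
    refine h3.congr_deriv ?_
    simp only [hφ']
    rw [show σ * (w / σ) = w by field_simp]
    field_simp
  have φc' : Continuous φ' := by fun_prop
  set g : ℝ → ℝ := fun w => w * φ w with hg
  have φc : Continuous φ := by fun_prop
  have gc : Continuous g := by fun_prop
  have gb : ∀ w, |g w| ≤ 1 := fun w => by
    have : g w = w/σ * f (w/σ) := by simp only [hg, hφ]; ring
    rw [this]; exact yf _
  have φ'b : ∀ w, |φ' w| ≤ 2 / σ^2 := by
    intro w
    simp only [hφ']
    rw [abs_div, abs_of_pos (by positivity : 0 < σ^2)]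
    gcongr
    have := abs_le.1 (yf (w/σ))
    rw [abs_le]
    constructor <;> linarith [h0 w, h1 w, this.1, this.2]
  have φb : ∀ w, |φ w| ≤ 5 / σ := by
    intro w
    simp only [hφ]
    rw [abs_div, abs_of_pos hσ]
    gcongr
    exact fb _
  have key := Tit_mul_id n φd φc' 0
  rw [zero_mul, zero_add, ← hs] at key
  have e1 : σ^2 * Tav^[n] (Wop kap φ') 0 =
      Tav^[n] (Wop kap g) 0 + Tav^[n] (Wop kap h) 0 - N := by
    have e2 : (fun w => σ^2 * φ' w) = fun w => g w + (h w + (-N)) := by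
      funext w; simp only [hφ', hg, hφ]; field_simp; ring
    have e3 := congrFun (Tit_smul n (g := Wop kap φ') (σ^2)) 0
    have k1 := Wop_cont kap_cont gc
    have k2 := Wop_cont kap_cont hc
    rw [← e3, ← Wop_smul, e2, Wop_add kap_cont gc (by fun_prop), Wop_add kap_cont hc (by fun_prop),
      kap_const, Tit_add n k1 (by fun_prop), Tit_add n k2 (by fun_prop), Tit_const]
    ring
  rw [e1, Function.iterate_succ_apply] at key
  -- pointwise bound
  have hstep : ∀ v, |Tav g v - Wop kap g v| ≤ (6/σ + 1/σ^2) + (1/σ^3) * v^2 := by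
    intro v
    set D := 5/σ + (|v| + 1/2) * (2/σ^2) with hD
    have hDpos : 0 ≤ D := by positivity
    have mv : ∀ u ∈ Set.Icc (-1/2:ℝ) (1/2), |g (v+u) - g v| ≤ D * (1/2) := by
      intro u hu
      have h5 := (convex_Icc (v-1/2) (v+1/2)).norm_image_sub_le_of_norm_hasDerivWithin_le
        (f := g) (f' := fun w => 1 * φ w + w * φ' w) (C := D) (x := v) (y := v+u)
        (fun w _ => ((hasDerivAt_id w).mul (φd w)).hasDerivWithinAt)
        (fun w hw => by
          rw [Real.norm_eq_abs, one_mul]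
          refine (abs_add_le _ _).trans ?_
          rw [abs_mul]
          refine add_le_add (φb w) (mul_le_mul ?_ (φ'b w) (abs_nonneg _) (by positivity))
          rw [abs_le]
          constructor <;> linarith [hw.1, hw.2, le_abs_self v, neg_abs_le v])
        ⟨by linarith, by linarith⟩ ⟨by linarith [hu.1], by linarith [hu.2]⟩
      rw [Real.norm_eq_abs, Real.norm_eq_abs] at h5
      refine h5.trans (mul_le_mul_of_nonneg_left ?_ hDpos)
      rw [add_sub_cancel_left, abs_le]
      constructor <;> linarith [hu.1, hu.2]
    have b1 := Wop_near (ω := fun _ => (1:ℝ)) continuous_const (by simp) gc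
      (fun c => Tav_const c) (v := v) (a := g v - D * (1/2)) (b := g v + D * (1/2))
      (fun u hu => by linarith [(abs_le.1 (mv u hu)).1])
      (fun u hu => by linarith [(abs_le.1 (mv u hu)).2])
    have b2 := Wop_near kap_cont (fun u hu => kap_nonneg hu) gc
      kap_const (v := v) (a := g v - D * (1/2)) (b := g v + D * (1/2))
      (fun u hu => by linarith [(abs_le.1 (mv u hu)).1])
      (fun u hu => by linarith [(abs_le.1 (mv u hu)).2])
    have b3 : |Tav g v - Wop kap g v| ≤ D := by
      rw [abs_le]; unfold Tav
      constructor <;> linarith [b1.1, b1.2, b2.1, b2.2]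
    refine b3.trans ?_
    have hv : 2 * |v| ≤ σ + v^2 / σ := by
      rw [← sub_nonneg]
      have : σ + v^2/σ - 2 * |v| = (σ - |v|)^2 / σ := by
        rw [← sq_abs v]; field_simp; ring
      rw [this]; positivity
    have : D = 5/σ + 1/σ^2 + (2 * |v|) * (1/σ^2) := by simp only [hD]; ring
    rw [this]
    have h6 := mul_le_mul_of_nonneg_right hv (by positivity : 0 ≤ 1/σ^2)
    have h7 : (σ + v^2/σ) * (1/σ^2) = 1/σ + (1/σ^3) * v^2 := by field_simp
    have h8 : 6/σ = 5/σ + 1/σ := by ring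
    linarith
  have hup : Tav^[n] (Tav g) 0 ≤ Tav^[n] (Wop kap g) 0 + (6/σ + 1/σ^2 + (1/σ^3) * n / 12) := by
    have k1 := Wop_cont kap_cont gc
    have := Tit_mono n (Tav_cont gc)
      (g' := fun v => Wop kap g v + ((6/σ + 1/σ^2) + (1/σ^3) * v^2)) (by fun_prop)
      (fun v => by linarith [(abs_le.1 (hstep v)).2]) 0
    rw [Tit_add n k1 (by fun_prop)] at this
    simp only [Tit_sq] at this
    simpa using this
  have hlo : Tav^[n] (Wop kap g) 0 ≤ Tav^[n] (Tav g) 0 + (6/σ + 1/σ^2 + (1/σ^3) * n / 12) := by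
    have k1 := Tav_cont gc
    have := Tit_mono n (Wop_cont kap_cont gc)
      (g' := fun v => Tav g v + ((6/σ + 1/σ^2) + (1/σ^3) * v^2)) (by fun_prop)
      (fun v => by linarith [(abs_le.1 (hstep v)).1]) 0
    rw [Tit_add n k1 (by fun_prop)] at this
    simp only [Tit_sq] at this
    simpa using this
  have hfin : 6/σ + 1/σ^2 + (1/σ^3) * n / 12 ≤ 12/σ := by
    have a1 : (1/σ^3) * n / 12 ≤ 1/σ := by
      have : (n:ℝ)/12 ≤ σ^2 := by rw [hs]; linarith
      calc (1/σ^3) * n / 12 = (n/12) / σ^3 := by ring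
        _ ≤ σ^2 / σ^3 := by gcongr
        _ = 1/σ := by field_simp
    have a2 : 1/σ ≤ 4 := by
      rw [div_le_iff₀ hσ]
      have : (1:ℝ)/12 ≤ σ^2 := by
        rw [hs]; have : (0:ℝ) ≤ n := Nat.cast_nonneg n
        linarith
      nlinarith
    have a3 : 1/σ^2 = (1/σ) * (1/σ) := by ring
    have a4 : 0 < 1/σ := by positivity
    have a5 : 6/σ = 6 * (1/σ) := by ring
    have a6 : 12/σ = 12 * (1/σ) := by ring
    rw [a3, a5, a6]
    nlinarith
  rw [abs_le]
  constructor <;> linarith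

noncomputable def gc0 : ℝ := (Real.sqrt (2 * Real.pi))⁻¹

lemma gc0_pos : 0 < gc0 := by unfold gc0; positivity

lemma gc0_le : gc0 ≤ 1 := by
  unfold gc0
  apply inv_le_one_of_one_le₀
  rw [Real.one_le_sqrt]
  linarith [Real.pi_gt_three]

open MeasureTheory in
lemma Phi_sub (a b : ℝ) : stdNormalCDF b - stdNormalCDF a =
    gc0 * ∫ t in a..b, Real.exp (-(t^2)/2) := by
  unfold stdNormalCDF gc0
  rw [← mul_sub, intervalIntegral.integral_Iic_sub_Iic gE_integrable.integrableOn
    gE_integrable.integrableOn]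

lemma Phi_lip' {a b M : ℝ} (hM : ∀ t ∈ Set.uIoc a b, Real.exp (-(t^2)/2) ≤ M) :
    |stdNormalCDF b - stdNormalCDF a| ≤ M * |b - a| := by
  rw [Phi_sub, abs_mul, abs_of_pos gc0_pos]
  have := intervalIntegral.norm_integral_le_of_norm_le_const (a := a) (b := b) (C := M)
    (f := fun t : ℝ => Real.exp (-(t^2)/2))
    (fun t ht => by rw [Real.norm_eq_abs, abs_of_pos (Real.exp_pos _)]; exact hM t ht)
  rw [Real.norm_eq_abs] at this
  have h2 := abs_nonneg (∫ t in a..b, Real.exp (-(t^2)/2))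
  nlinarith [gc0_le, gc0_pos]

lemma Phi_lip (a b : ℝ) : |stdNormalCDF b - stdNormalCDF a| ≤ |b - a| := by
  have := Phi_lip' (a := a) (b := b) (M := 1) (fun t _ => by
    rw [Real.exp_le_one_iff]; nlinarith [sq_nonneg t])
  simpa using this

lemma Phi_scale {a : ℝ} (ha : 1 ≤ a) (x : ℝ) :
    |stdNormalCDF (a * x) - stdNormalCDF x| ≤ a - 1 := by
  have h := Phi_lip' (a := x) (b := a * x) (M := Real.exp (-(x^2)/2)) (fun t ht => by
    apply Real.exp_le_exp.2
    have : x^2 ≤ t^2 := by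
      rcases le_total 0 x with hx | hx
      · rw [Set.uIoc_of_le (by nlinarith)] at ht
        nlinarith [ht.1]
      · rw [Set.uIoc_of_ge (by nlinarith)] at ht
        nlinarith [ht.2]
    linarith)
  refine h.trans ?_
  have e : a * x - x = (a - 1) * x := by ring
  rw [e, abs_mul, abs_of_nonneg (by linarith)]
  have h2 : Real.exp (-(x^2)/2) * |x| ≤ 1 := by
    have h3 : |x| ≤ Real.exp (x^2/2) := by
      have := Real.add_one_le_exp (x^2/2)
      nlinarith [sq_abs x, sq_nonneg (|x| - 1)]
    have h4 : Real.exp (-(x^2)/2) * Real.exp (x^2/2) = 1 := by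
      rw [← Real.exp_add]; simp; ring
    rw [← h4]
    exact mul_le_mul_of_nonneg_left h3 (Real.exp_pos _).le
  nlinarith

noncomputable def ramp0 (x : ℝ) : ℝ := max 0 (min 1 (x + 1/2))

lemma ramp0_cont : Continuous ramp0 := by unfold ramp0; fun_prop

lemma ramp0_nonneg (x : ℝ) : 0 ≤ ramp0 x := le_max_left _ _

lemma ramp0_le (x : ℝ) : ramp0 x ≤ 1 := max_le zero_le_one (min_le_left _ _)

lemma ramp0_mono : Monotone ramp0 := fun x y h => by
  unfold ramp0
  exact max_le_max le_rfl (min_le_min le_rfl (by linarith))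

lemma ramp0_one {x : ℝ} (h : 1/2 ≤ x) : ramp0 x = 1 := by
  unfold ramp0
  rw [min_eq_left (by linarith), max_eq_right zero_le_one]

lemma ramp0_zero {x : ℝ} (h : x ≤ -1/2) : ramp0 x = 0 := by
  unfold ramp0
  rw [min_eq_right (by linarith), max_eq_left (by linarith)]

open MeasureTheory in
lemma Ng_ramp {σ : ℝ} (hσ : 0 < σ) (x : ℝ) :
    stdNormalCDF ((x - 1/2) / σ) ≤ Ng (fun t => ramp0 (σ * t + x)) ∧
    Ng (fun t => ramp0 (σ * t + x)) ≤ stdNormalCDF ((x + 1/2) / σ) := by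
  have hp : 0 ≤ (Real.sqrt (2 * Real.pi))⁻¹ := by positivity
  have hc : Continuous (fun t => ramp0 (σ * t + x)) := by have := ramp0_cont; fun_prop
  have hi := hE_integrable hc (c := 1) (fun t => by
    rw [abs_of_nonneg (ramp0_nonneg _)]; exact ramp0_le _)
  constructor
  · unfold stdNormalCDF Ng
    apply mul_le_mul_of_nonneg_left _ hp
    rw [← neg_neg ((x - 1/2) / σ), ← gE_Ioi]
    have e : ∫ t in Set.Ioi (-((x - 1/2)/σ)), Real.exp (-(t^2)/2) =
        ∫ t in Set.Ioi (-((x - 1/2)/σ)), ramp0 (σ * t + x) * Real.exp (-(t^2)/2) := by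
      apply setIntegral_congr_fun measurableSet_Ioi
      intro t ht
      have ht : -((x - 1/2)/σ) < t := ht
      rw [← neg_div, div_lt_iff₀ hσ] at ht
      simp only
      rw [ramp0_one (by linarith), one_mul]
    rw [e]
    exact setIntegral_le_integral hi (Filter.Eventually.of_forall fun t =>
      mul_nonneg (ramp0_nonneg _) (Real.exp_pos _).le)
  · unfold stdNormalCDF Ng
    apply mul_le_mul_of_nonneg_left _ hp
    rw [← neg_neg ((x + 1/2) / σ), ← gE_Ioi,
      ← setIntegral_eq_integral_of_forall_compl_eq_zero (s := Set.Ioi (-((x + 1/2)/σ)))]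
    · apply setIntegral_mono_on hi.integrableOn gE_integrable.integrableOn measurableSet_Ioi
      intro t _
      have := mul_le_mul_of_nonneg_right (ramp0_le (σ * t + x)) (Real.exp_pos (-(t^2)/2)).le
      simpa using this
    · intro t ht
      have ht : t ≤ -((x + 1/2)/σ) := by simpa using ht
      rw [← neg_div, le_div_iff₀ hσ] at ht
      have hz : ramp0 (σ * t + x) = 0 := ramp0_zero (by linarith)
      simp only [hz, zero_mul]

lemma be_main (n : ℕ) {σ : ℝ} (hσ : 0 < σ) (hs : σ^2 = ((n:ℝ)+1)/12) (x : ℝ) :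
    |Tav^[n] ramp0 x - stdNormalCDF (x / σ)| ≤ 13 / σ := by
  have hk : ∀ y, |Tav^[n] (Wop kap ramp0) y - Ng (fun t => ramp0 (σ * t + y))| ≤ 12 / σ := by
    intro y
    have h1 := be1 n hσ hs (h := fun w => ramp0 (w + y)) (by have := ramp0_cont; fun_prop)
      (fun t => ramp0_nonneg _) (fun t => ramp0_le _)
    have e : Wop kap (fun w => ramp0 (w + y)) = fun v => Wop kap ramp0 (v + y) := by
      funext v; unfold Wop
      refine intervalIntegral.integral_congr fun u _ => ?_
      simp only; rw [add_right_comm]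
    rw [e, Tit_shift] at h1
    simpa using h1
  have hnear : ∀ v, ramp0 (v - 1/2) ≤ Wop kap ramp0 v ∧ Wop kap ramp0 v ≤ ramp0 (v + 1/2) := fun v =>
    Wop_near kap_cont (fun u hu => kap_nonneg hu) ramp0_cont kap_const
      (fun u hu => ramp0_mono (by linarith [hu.1])) (fun u hu => ramp0_mono (by linarith [hu.2]))
  have c0 := ramp0_cont
  have cK := Wop_cont kap_cont ramp0_cont
  have up : Tav^[n] ramp0 x ≤ Tav^[n] (Wop kap ramp0) (x + 1/2) := by
    have := Tit_mono n (g := ramp0) (g' := fun v => Wop kap ramp0 (v + 1/2)) c0 (by fun_prop)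
      (fun v => by have := (hnear (v + 1/2)).1; simpa using this) x
    rw [Tit_shift] at this
    exact this
  have lo : Tav^[n] (Wop kap ramp0) (x + (-1/2)) ≤ Tav^[n] ramp0 x := by
    have := Tit_mono n (g' := ramp0) (g := fun v => Wop kap ramp0 (v + (-1/2))) (by fun_prop) c0
      (fun v => by
        have := (hnear (v + (-1/2))).2
        rw [show v + (-1/2) + 1/2 = v by ring] at this
        exact this) x
    rw [Tit_shift] at this
    exact this
  have h1 := abs_le.1 (hk (x + 1/2))
  have h2 := abs_le.1 (hk (x + (-1/2)))
  have h3 := (Ng_ramp hσ (x + 1/2)).2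
  have h4 := (Ng_ramp hσ (x + (-1/2))).1
  have h5 := abs_le.1 (Phi_lip (x / σ) ((x + 1/2 + 1/2)/σ))
  have h6 := abs_le.1 (Phi_lip ((x + (-1/2) - 1/2)/σ) (x / σ))
  have e5 : |(x + 1/2 + 1/2)/σ - x/σ| = 1/σ := by
    rw [show (x + 1/2 + 1/2)/σ - x/σ = 1/σ by ring, abs_of_pos (by positivity)]
  have e6 : |x/σ - (x + (-1/2) - 1/2)/σ| = 1/σ := by
    rw [show x/σ - (x + (-1/2) - 1/2)/σ = 1/σ by ring, abs_of_pos (by positivity)]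
  rw [e5] at h5
  rw [e6] at h6
  have e7 : 13/σ = 12/σ + 1/σ := by ring
  rw [abs_le, e7]
  constructor <;> linarith [h1.1, h1.2, h2.1, h2.2, h5.1, h5.2, h6.1, h6.2]

/-! ### Finite differences -/

def nab {R : Type*} [Sub R] [One R] (f : R → ℝ) (x : R) : ℝ := f x - f (x - 1)

lemma nab_sum {R ι : Type*} [Sub R] [One R] (m : ℕ) (s : Finset ι) (c : ι → ℝ) :
    ∀ (f : ι → R → ℝ), nab^[m] (fun x => ∑ i ∈ s, c i * f i x) =
      fun x => ∑ i ∈ s, c i * nab^[m] (f i) x := by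
  induction m with
  | zero => intro f; rfl
  | succ m ih =>
    intro f
    have : nab (fun x => ∑ i ∈ s, c i * f i x) = fun x => ∑ i ∈ s, c i * nab (f i) x := by
      funext x
      simp only [nab, mul_sub, Finset.sum_sub_distrib]
    simp only [Function.iterate_succ_apply]
    rw [this, ih]

lemma nab_cast (m : ℕ) : ∀ (p : ℝ → ℝ) (x : ℤ),
    nab^[m] (fun z : ℤ => p (z:ℝ)) x = nab^[m] p (x:ℝ) := by
  induction m with
  | zero => intro p x; rfl
  | succ m ih =>
    intro p x
    simp only [Function.iterate_succ_apply]
    rw [← ih]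
    have : nab (fun z : ℤ => p (z:ℝ)) = fun z : ℤ => nab p (z:ℝ) := by
      funext z
      simp [nab]
    rw [this]

lemma nab_shift {R : Type*} [AddCommGroup R] [One R] (m : ℕ) : ∀ (f : R → ℝ) (a : R),
    nab^[m] (fun z => f (z - a)) = fun z => nab^[m] f (z - a) := by
  induction m with
  | zero => intro f a; rfl
  | succ m ih =>
    intro f a
    simp only [Function.iterate_succ_apply]
    rw [← ih]
    congr 1
    funext z
    simp only [nab]
    rw [sub_right_comm]

lemma nab_local (m : ℕ) : ∀ (f g : ℤ → ℝ) (a : ℤ), (∀ z, a ≤ z → f z = g z) →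
    ∀ z, a + m ≤ z → nab^[m] f z = nab^[m] g z := by
  induction m with
  | zero => intro f g a h z hz; exact h z (by simpa using hz)
  | succ m ih =>
    intro f g a h z hz
    simp only [Function.iterate_succ_apply]
    refine ih _ _ (a+1) (fun y hy => ?_) z (by push_cast at hz; linarith)
    simp only [nab]
    rw [h y (by linarith), h (y-1) (by linarith)]

lemma nab_zero {R : Type*} [Sub R] [One R] (m : ℕ) : nab^[m] (fun _ : R => (0:ℝ)) = fun _ => 0 := by
  induction m with
  | zero => rfl
  | succ m ih =>
    rw [Function.iterate_succ_apply]
    have : nab (fun _ : R => (0:ℝ)) = fun _ => 0 := by funext x; simp [nab]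
    rw [this, ih]

noncomputable def rr (n : ℕ) (y : ℤ) : ℝ := if y < 0 then 0 else ((y.toNat + n).choose n : ℝ)

lemma nab_rr (n : ℕ) : nab (rr (n+1)) = rr n := by
  funext y
  simp only [nab, rr]
  rcases lt_trichotomy y 0 with h | h | h
  · rw [if_pos h, if_pos (by omega), if_pos h]; simp
  · subst h; simp
  · rw [if_neg (by omega), if_neg (by omega), if_neg (by omega)]
    obtain ⟨m, rfl⟩ : ∃ m : ℕ, y = (m:ℤ) + 1 := ⟨(y-1).toNat, by omega⟩
    have e1 : ((m:ℤ)+1).toNat = m + 1 := by omega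
    have e2 : ((m:ℤ)+1-1).toNat = m := by omega
    rw [e1, e2, show m + 1 + (n+1) = (m + 1 + n) + 1 by ring, Nat.choose_succ_succ,
      show m + (n+1) = m + 1 + n by ring]
    push_cast; ring

lemma nab_rr_iter (m : ℕ) : ∀ j, nab^[m] (rr (m + j)) = rr j := by
  induction m with
  | zero => intro j; simp
  | succ m ih =>
    intro j
    rw [Function.iterate_succ_apply, show m + 1 + j = (m + j) + 1 by ring, nab_rr, ih]

lemma descents_le {n : ℕ} (π : Equiv.Perm (Fin (n+1))) : descents π ≤ n := by
  unfold descents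
  have : (Finset.univ.filter fun i : Fin (n+1) =>
      ∃ h : (i : ℕ) + 1 < n+1, π ⟨(i : ℕ) + 1, h⟩ < π i) ⊆ Finset.univ.erase (Fin.last n) := by
    intro i hi
    simp only [Finset.mem_filter, Finset.mem_univ, true_and] at hi
    obtain ⟨h, _⟩ := hi
    simp only [Finset.mem_erase, Finset.mem_univ, and_true]
    rintro rfl
    simp at h
  refine (Finset.card_le_card this).trans ?_
  rw [Finset.card_erase_of_mem (Finset.mem_univ _)]
  simp

lemma rr_sum (n : ℕ) (x : ℤ) :
    ∑ π ∈ involutions (n+1), rr (n+1) (x - 1 - descents π) =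
      ∑ k ∈ range (n+2), cc (n+1) k * (max (x:ℝ) 0)^k := by
  rcases lt_or_ge x 0 with h | h
  · rw [Finset.sum_eq_zero, Finset.sum_eq_zero]
    · intro k _
      have : (x:ℝ) < 0 := by exact_mod_cast h
      rw [max_eq_right this.le]
      rcases k with _ | k
      · rw [cc_const]; simp
      · simp
    · intro π _
      rw [rr, if_pos (by omega)]
  · obtain ⟨s, rfl⟩ := Int.eq_ofNat_of_zero_le h
    have h1 := sum_choose_eq n s
    have h2 := matCount_eq_eval (n+1) s
    have hd : (Qp (n+1)).natDegree < n + 2 := by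
      refine Nat.lt_succ_of_le (Polynomial.natDegree_le_iff_coeff_eq_zero.2 fun k hk => ?_)
      exact (cc_props (n+1) k).2 hk
    rw [Polynomial.eval_eq_sum_range' hd, ← h1] at h2
    have e : max (((s:ℕ):ℤ):ℝ) 0 = (s:ℝ) := by
      rw [Int.cast_natCast]; exact max_eq_left (Nat.cast_nonneg s)
    rw [e]
    unfold cc
    rw [← h2]
    push_cast
    refine Finset.sum_congr rfl fun π _ => ?_
    have hdes := descents_le π
    rw [rr]
    split_ifs with hneg
    · rw [Nat.choose_eq_zero_of_lt (by omega)]; simp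
    · congr 2
      omega

/-! ### Truncated powers -/

lemma Tav_shift (g : ℝ → ℝ) (a : ℝ) : Tav (fun w => g (w - a)) = fun x => Tav g (x - a) := by
  have := Tit_shift 1 g (-a)
  simpa [sub_eq_add_neg] using this

lemma nab_Tav {g : ℝ → ℝ} (hg : Continuous g) : nab (Tav g) = Tav (nab g) := by
  funext x
  simp only [nab, Tav_eq]
  rw [← intervalIntegral.integral_sub]
  · refine intervalIntegral.integral_congr fun u _ => ?_
    rw [show x - 1 + u = x + u - 1 by ring]
  · exact Continuous.intervalIntegrable (by fun_prop) _ _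
  · exact Continuous.intervalIntegrable (by fun_prop) _ _

lemma nab_cont {g : ℝ → ℝ} (hg : Continuous g) : Continuous (nab g) := by
  unfold nab; fun_prop

lemma nab_iter_Tav (m : ℕ) : ∀ {g : ℝ → ℝ}, Continuous g →
    nab^[m] (Tav g) = Tav (nab^[m] g) := by
  induction m with
  | zero => intro g _; rfl
  | succ m ih =>
    intro g hg
    rw [Function.iterate_succ_apply, nab_Tav hg, ih (nab_cont hg), ← Function.iterate_succ_apply]

lemma nab_of_deriv {f f' : ℝ → ℝ} (hf : ∀ x, HasDerivAt f (f' x) x) (hf' : Continuous f') :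
    nab f = fun x => Tav f' (x - 1/2) := by
  funext x
  rw [Tav_eq', intervalIntegral.integral_eq_sub_of_hasDerivAt (fun u _ => hf u)
      (hf'.intervalIntegrable _ _), nab]
  congr 2 <;> ring

noncomputable def pp (k : ℕ) (x : ℝ) : ℝ := (max x 0)^k / k.factorial

noncomputable def qq (k : ℕ) (x : ℝ) : ℝ := x^k / k.factorial

lemma pp_cont (k : ℕ) : Continuous (pp k) := by unfold pp; fun_prop

lemma qq_cont (k : ℕ) : Continuous (qq k) := by unfold qq; fun_prop

lemma qq_deriv (k : ℕ) (x : ℝ) : HasDerivAt (qq (k+1)) (qq k x) x := by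
  have := (hasDerivAt_pow (k+1) x).div_const ((k+1).factorial : ℝ)
  refine this.congr_deriv ?_
  rw [qq, Nat.factorial_succ]
  have h1 : (k.factorial : ℝ) ≠ 0 := by positivity
  have h2 : ((k:ℝ)+1) ≠ 0 := by positivity
  push_cast
  field_simp

lemma pp_deriv (k : ℕ) (x : ℝ) : HasDerivAt (pp (k+2)) (pp (k+1) x) x := by
  rcases lt_trichotomy x 0 with h | h | h
  · have e : pp (k+1) x = 0 := by rw [pp, max_eq_right h.le]; simp
    rw [e]
    refine (hasDerivAt_const x (0:ℝ)).congr_of_eventuallyEq ?_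
    filter_upwards [Iio_mem_nhds h] with y hy
    have hy : y < 0 := hy
    rw [pp, max_eq_right hy.le]; simp
  · subst h
    have e : pp (k+1) 0 = 0 := by simp [pp]
    rw [e, hasDerivAt_iff_isLittleO_nhds_zero]
    have e2 : pp (k+2) 0 = 0 := by simp [pp]
    simp only [zero_add, e2, sub_zero, smul_zero]
    have h1 : (fun h : ℝ => pp (k+2) h) =O[nhds 0] fun h : ℝ => h^(k+2) := by
      refine Asymptotics.IsBigO.of_bound 1 (Filter.Eventually.of_forall fun y => ?_)
      rw [pp, norm_div, norm_pow, norm_pow, one_mul]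
      have a1 : ‖max y 0‖ ≤ ‖y‖ := by
        rw [Real.norm_eq_abs, Real.norm_eq_abs]
        rcases le_total y 0 with h | h
        · rw [max_eq_right h]; simp
        · rw [max_eq_left h]
      have a2 : (1:ℝ) ≤ ‖((k+2).factorial : ℝ)‖ := by
        rw [Real.norm_eq_abs, abs_of_nonneg (by positivity)]
        exact_mod_cast Nat.one_le_iff_ne_zero.2 (Nat.factorial_ne_zero _)
      exact (div_le_self (by positivity) a2).trans (by gcongr)
    have h2 : (fun h : ℝ => h^(k+2)) =o[nhds 0] fun h : ℝ => h := by
      have := Asymptotics.isLittleO_pow_pow (𝕜 := ℝ) (m := 1) (n := k+2) (by omega)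
      simpa using this
    exact h1.trans_isLittleO h2
  · have e : pp (k+1) x = qq (k+1) x := by rw [pp, qq, max_eq_left h.le]
    rw [e]
    refine (qq_deriv (k+1) x).congr_of_eventuallyEq ?_
    filter_upwards [Ioi_mem_nhds h] with y hy
    have hy : 0 < y := hy
    rw [pp, qq, max_eq_left hy.le]

noncomputable def IH (k : ℕ) (x : ℝ) : ℝ := Tav^[k] ramp0 (x - (k+1)/2)

lemma nab_pp (k : ℕ) : nab^[k+1] (pp (k+1)) = IH k := by
  induction k with
  | zero =>
    funext x
    simp only [zero_add, Function.iterate_one, nab, pp, IH, Function.iterate_zero, id, ramp0]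
    simp only [pow_one, Nat.factorial_one, Nat.cast_one, div_one, Nat.cast_zero, zero_add]
    rcases le_total x 0 with h | h
    · rw [max_eq_right h, max_eq_right (by linarith), min_eq_right (by linarith),
        max_eq_left (by linarith)]; simp
    · rcases le_total x 1 with h1 | h1
      · rw [max_eq_left h, max_eq_right (by linarith), min_eq_right (by linarith),
          max_eq_right (by linarith)]; ring
      · rw [max_eq_left h, max_eq_left (by linarith), min_eq_left (by linarith),
          max_eq_right (by linarith)]; ring
  | succ k ih =>
    rw [Function.iterate_succ_apply, nab_of_deriv (pp_deriv k) (pp_cont _),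
      nab_shift, nab_iter_Tav _ (pp_cont _), ih]
    unfold IH
    rw [Tav_shift]
    funext x
    rw [Function.iterate_succ_apply']
    push_cast
    ring_nf

lemma nab_qq (m : ℕ) : ∀ j x, nab^[m] (qq (m + j)) x = Tav^[m] (qq j) (x - m/2) := by
  induction m with
  | zero => intro j x; simp
  | succ m ih =>
    intro j x
    have e : m + 1 + j = (m + j) + 1 := by ring
    rw [Function.iterate_succ_apply, e, nab_of_deriv (qq_deriv _) (qq_cont _), nab_shift,
      nab_iter_Tav _ (qq_cont _)]
    have : nab^[m] (qq (m + j)) = fun x => Tav^[m] (qq j) (x - m/2) := by funext x; exact ih j x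
    rw [this, Tav_shift, Function.iterate_succ_apply']
    push_cast
    ring_nf

lemma nab_qq_low {m k : ℕ} (h : k < m) (x : ℝ) : nab^[m] (qq k) x = 0 := by
  obtain ⟨i, rfl⟩ : ∃ i, m = i + 1 + k := ⟨m - k - 1, by omega⟩
  have h1 : nab^[k] (qq k) = fun _ => 1 := by
    funext y
    have := nab_qq k 0 y
    rw [add_zero] at this
    rw [this]
    have e : qq 0 = fun _ => 1 := by funext z; simp [qq]
    rw [e, Tit_const]
  rw [Function.iterate_add_apply, h1, Function.iterate_succ_apply]
  have : nab (fun _ : ℝ => (1:ℝ)) = fun _ => 0 := by funext x; simp [nab]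
  rw [this, nab_zero]

/-! ### The two identities -/

lemma rr_zero (y : ℤ) : rr 0 y = if y < 0 then 0 else 1 := by simp [rr]

lemma rr_sum_nab (n m j : ℕ) (h : m + j = n + 1) (x : ℤ) :
    ∑ π ∈ involutions (n+1), rr j (x - 1 - descents π) =
      ∑ k ∈ range (n+2), (cc (n+1) k * k.factorial) * nab^[m] (pp k) (x:ℝ) := by
  have h1 : (fun x : ℤ => ∑ π ∈ involutions (n+1), (1:ℝ) * rr (n+1) (x - (1 + descents π))) =
      fun x : ℤ => ∑ k ∈ range (n+2), (cc (n+1) k * k.factorial) * pp k (x:ℝ) := by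
    funext x
    have := rr_sum n x
    simp only [one_mul]
    calc _ = _ := Finset.sum_congr rfl fun π _ => by rw [sub_sub]
      _ = _ := this
      _ = _ := Finset.sum_congr rfl fun k _ => by
        rw [pp]
        have : (k.factorial : ℝ) ≠ 0 := by positivity
        field_simp
  have h2 := congrFun (congrArg (nab^[m]) h1) x
  rw [nab_sum (R := ℤ) m (involutions (n+1)) (fun _ => (1:ℝ))
      (fun π x => rr (n+1) (x - (1 + descents π))),
    nab_sum (R := ℤ) m (range (n+2)) (fun k => cc (n+1) k * k.factorial)
      (fun k x => pp k (x:ℝ))] at h2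
  simp only [nab_cast, nab_shift, ← h, nab_rr_iter, one_mul] at h2
  rw [h] at h2
  rw [← h2]
  exact Finset.sum_congr rfl fun π _ => by rw [sub_sub]

lemma count_eq (n : ℕ) (x : ℤ) :
    (((involutions (n+1)).filter fun π => (descents π : ℤ) + 1 ≤ x).card : ℝ) =
      ∑ k ∈ range (n+1), (cc (n+1) (k+1) * (k+1).factorial) * nab^[n-k] (IH k) (x:ℝ) := by
  have h := rr_sum_nab n (n+1) 0 rfl x
  rw [Finset.sum_range_succ', cc_const, zero_mul, zero_mul, add_zero] at h
  rw [Finset.card_filter]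
  push_cast
  calc _ = _ := Finset.sum_congr rfl fun π _ => by
        rw [rr_zero]
        split_ifs <;> first | rfl | omega
    _ = _ := h
    _ = _ := Finset.sum_congr rfl fun k hk => by
        rw [mem_range] at hk
        rw [← nab_pp, ← Function.iterate_add_apply, show n - k + (k+1) = n + 1 by omega]

lemma quad_eq (m : ℕ) (x : ℤ) (hx : (m:ℤ) + 2 ≤ x) :
    ∑ π ∈ involutions (m+2), ((x:ℝ) - descents π + 1) * ((x:ℝ) - descents π) / 2 =
      tt (m+2) * (((x:ℝ) - m/2)^2 + m/12) / 2 + cc (m+2) m * m.factorial := by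
  have h := rr_sum_nab (m+1) m 2 rfl x
  have h1 : ∀ k, nab^[m] (pp k) (x:ℝ) = nab^[m] (qq k) (x:ℝ) := by
    intro k
    rw [← nab_cast, ← nab_cast]
    apply nab_local m _ _ 0 _ x (by omega)
    intro z hz
    have : (0:ℝ) ≤ z := by exact_mod_cast hz
    rw [pp, qq, max_eq_left this]
  simp only [h1] at h
  rw [Finset.sum_range_succ, Finset.sum_range_succ, Finset.sum_range_succ, cc_sub_one,
    Finset.sum_eq_zero (s := range m)
      (fun k hk => by rw [nab_qq_low (mem_range.1 hk), mul_zero])] at h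
  have e0 := nab_qq m 0 x
  have e2 := nab_qq m 2 x
  have q0 : qq 0 = fun _ => 1 := by funext z; simp [qq]
  have q2 : qq 2 = fun v => 0 + (1/2) * v^2 := by funext z; simp [qq]; ring
  rw [q0, Tit_const, add_zero] at e0
  rw [q2, Tit_sq] at e2
  rw [e0, show m + 1 + 1 = m + 2 by ring, e2] at h
  have hl : ∀ π ∈ involutions (m+2), rr 2 (x - 1 - descents π) =
      ((x:ℝ) - descents π + 1) * ((x:ℝ) - descents π) / 2 := by
    intro π _
    have := descents_le π
    rw [rr, if_neg (by omega), Nat.cast_choose_two]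
    have e : (((x - 1 - (descents π : ℤ)).toNat : ℕ) : ℝ) = (x:ℝ) - 1 - descents π := by
      have : (((x - 1 - (descents π : ℤ)).toNat : ℕ) : ℤ) = x - 1 - descents π := by omega
      exact_mod_cast this
    push_cast
    rw [e]; ring
  rw [← Finset.sum_congr rfl hl, h]
  unfold tt
  ring

lemma moments (m : ℕ) :
    ((involutions (m+2)).card : ℝ) = tt (m+2) ∧ invMean (m+2) = ((m:ℝ)+1)/2 ∧
    invVar (m+2) = ((m:ℝ)+3)/12 + 2 * (cc (m+2) m * m.factorial / tt (m+2)) := by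
  set S := involutions (m+2) with hS
  set t := tt (m+2) with ht
  have tp : 0 < t := tt_pos _
  set w := cc (m+2) m * m.factorial with hw
  set S1 := ∑ π ∈ S, (descents π : ℝ) with hS1
  set S2 := ∑ π ∈ S, (descents π : ℝ)^2 with hS2
  have key : ∀ x : ℤ, (m:ℤ) + 2 ≤ x →
      (S.card : ℝ) * (x^2 + x) - 2 * x * S1 - S1 + S2 = t * (((x:ℝ) - m/2)^2 + m/12) + 2 * w := by
    intro x hx
    have h := quad_eq m x hx
    have e : ∑ π ∈ involutions (m+2), ((x:ℝ) - descents π + 1) * ((x:ℝ) - descents π) / 2 =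
      ((S.card : ℝ) * (x^2 + x) - 2 * x * S1 - S1 + S2) / 2 := by
      rw [hS1, hS2, ← nsmul_eq_mul, ← Finset.sum_const, Finset.mul_sum, ← Finset.sum_sub_distrib,
        ← Finset.sum_sub_distrib, ← Finset.sum_add_distrib, Finset.sum_div]
      refine Finset.sum_congr rfl fun π _ => ?_
      ring
    rw [e] at h
    linarith
  have k0 := key (m+2) le_rfl
  have k1 := key (m+3) (by omega)
  have k2 := key (m+4) (by omega)
  push_cast at k0 k1 k2
  have hN : (S.card : ℝ) = t := by linarith
  rw [hN] at k0 k1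
  have hS1' : S1 = t * (m+1)/2 := by linarith
  have hM : invMean (m+2) = ((m:ℝ)+1)/2 := by
    unfold invMean
    rw [← hS, ← hS1, hN, hS1']; field_simp
  refine ⟨hN, hM, ?_⟩
  unfold invVar
  rw [hM, ← hS, hN]
  have e : ∑ π ∈ S, ((descents π : ℝ) - ((m:ℝ)+1)/2)^2 =
      S2 - (m+1) * S1 + t * (((m:ℝ)+1)/2)^2 := by
    rw [← hN, hS1, hS2, ← nsmul_eq_mul, ← Finset.sum_const, Finset.mul_sum,
      ← Finset.sum_sub_distrib, ← Finset.sum_add_distrib]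
    refine Finset.sum_congr rfl fun π _ => ?_
    ring
  rw [e]
  rw [hS1'] at k0 ⊢
  have hS2' : S2 = t * (((m:ℝ) + 2 - m/2)^2 + m/12) + 2 * w - t * (((m:ℝ)+2)^2 + (m+2)) +
    2 * ((m:ℝ)+2) * (t * (m+1)/2) + t * (m+1)/2 := by linarith
  rw [hS2']
  field_simp
  ring

/-! ### Assembly -/

lemma inv_sig (k : ℕ) : ∃ σ : ℝ, 0 < σ ∧ σ^2 = ((k:ℝ)+1)/12 ∧ 1/σ ≤ 4 / Real.sqrt ((k:ℝ)+1) := by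
  have hk : (0:ℝ) < (k:ℝ)+1 := by positivity
  refine ⟨Real.sqrt (((k:ℝ)+1)/12), by positivity, Real.sq_sqrt (by positivity), ?_⟩
  have h1 : Real.sqrt ((k:ℝ)+1) ≤ 4 * Real.sqrt (((k:ℝ)+1)/12) := by
    apply Real.sqrt_le_iff.2
    refine ⟨by positivity, ?_⟩
    rw [mul_pow, Real.sq_sqrt (by positivity)]
    linarith
  rw [div_le_div_iff₀ (by positivity) (by positivity)]
  linarith

lemma IH_be (k : ℕ) {σ : ℝ} (hσ : 0 < σ) (hs : σ^2 = ((k:ℝ)+1)/12) (x : ℝ) :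
    |IH k x - stdNormalCDF ((x - ((k:ℝ)+1)/2)/σ)| ≤ 13 / σ :=
  be_main k hσ hs _

lemma nab_IH (k : ℕ) (x : ℝ) : |nab (IH k) x| ≤ 108 / Real.sqrt ((k:ℝ)+1) := by
  obtain ⟨σ, hσ, hs, hb⟩ := inv_sig k
  have h1 := abs_le.1 (IH_be k hσ hs x)
  have h2 := abs_le.1 (IH_be k hσ hs (x-1))
  have h3 := Phi_lip ((x - 1 - ((k:ℝ)+1)/2)/σ) ((x - ((k:ℝ)+1)/2)/σ)
  rw [show (x - ((k:ℝ)+1)/2)/σ - (x - 1 - ((k:ℝ)+1)/2)/σ = 1/σ by ring,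
    abs_of_pos (by positivity : 0 < 1/σ)] at h3
  have h4 := abs_le.1 h3
  have e1 : 13/σ = 13 * (1/σ) := by ring
  have e2 : 108 / Real.sqrt ((k:ℝ)+1) = 27 * (4 / Real.sqrt ((k:ℝ)+1)) := by ring
  rw [e1] at h1 h2
  rw [e2, nab, abs_le]
  constructor <;> linarith [h1.1, h1.2, h2.1, h2.2, h4.1, h4.2]

lemma nab_bound (i : ℕ) : ∀ {f : ℝ → ℝ} {M : ℝ}, (∀ x, |f x| ≤ M) →
    ∀ x, |nab^[i] f x| ≤ 2^i * M := by
  induction i with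
  | zero => intro f M h x; simpa using h x
  | succ i ih =>
    intro f M h x
    rw [Function.iterate_succ_apply, pow_succ, mul_assoc]
    refine ih (fun y => ?_) x
    have h1 := abs_le.1 (h y)
    have h2 := abs_le.1 (h (y-1))
    rw [nab, abs_le]
    constructor <;> linarith [h1.1, h1.2, h2.1, h2.2]

lemma sum_half (L : ℕ) : ∑ k ∈ range L, (1/2:ℝ)^(L-k) ≤ 1 := by
  have : ∑ k ∈ range L, (1/2:ℝ)^(L-k) = 1 - (1/2)^L := by
    induction L with
    | zero => simp
    | succ L ih =>
      rw [Finset.sum_range_succ']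
      simp only [Nat.add_sub_add_right, Nat.sub_zero]
      rw [ih, pow_succ]; ring
  rw [this]
  have : (0:ℝ) < (1/2)^L := by positivity
  linarith

lemma count_approx : ∃ K : ℝ, 0 < K ∧ ∀ (L : ℕ) (x : ℤ),
    |(((involutions (L+1)).filter fun π => (descents π : ℤ) + 1 ≤ x).card : ℝ) / tt (L+1)
      - IH L (x:ℝ)| ≤ K / Real.sqrt ((L:ℝ)+1) := by
  obtain ⟨K, hK, hb⟩ := bt_decay
  refine ⟨K * 108, by positivity, fun L x => ?_⟩
  have tp := tt_pos (L+1)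
  have hL : (0:ℝ) < Real.sqrt ((L:ℝ)+1) := by positivity
  rw [count_eq, Finset.sum_range_succ]
  have e1 : cc (L+1) (L+1) * ((L+1).factorial : ℝ) = tt (L+1) := by unfold tt; ring
  rw [e1, Nat.sub_self, Function.iterate_zero, id, add_div, mul_div_cancel_left₀ _ tp.ne',
    add_sub_cancel_right, Finset.sum_div]
  refine (Finset.abs_sum_le_sum_abs _ _).trans ?_
  have hterm : ∀ k ∈ range L, |cc (L+1) (k+1) * ((k+1).factorial : ℝ) * nab^[L-k] (IH k) (x:ℝ)
      / tt (L+1)| ≤ (K * 108 / Real.sqrt ((L:ℝ)+1)) * (1/2)^(L-k) := by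
    intro k hk
    rw [mem_range] at hk
    obtain ⟨i, rfl⟩ : ∃ i, L = k + (i + 1) := ⟨L - k - 1, by omega⟩
    rw [Nat.add_sub_cancel_left]
    set n := k + (i+1) with hn
    have hw : cc (n+1) (k+1) * ((k+1).factorial : ℝ) / tt (n+1) ≤ bt (i+1) := by
      rw [div_le_iff₀ tp, mul_comm]
      exact cc_bound (n+1) (k+1) (i+1) (by omega)
    have hw0 : 0 ≤ cc (n+1) (k+1) * ((k+1).factorial : ℝ) / tt (n+1) := by
      have := (cc_props (n+1) (k+1)).1
      positivity
    have hn1 : |nab^[i+1] (IH k) (x:ℝ)| ≤ 2^i * (108 / Real.sqrt ((k:ℝ)+1)) := by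
      rw [Function.iterate_succ_apply]
      exact nab_bound i (nab_IH k) _
    have hbt : bt (i+1) ≤ K / 8^(i+1) := by
      rw [le_div_iff₀ (by positivity)]; exact hb _
    have hsq : 1 / Real.sqrt ((k:ℝ)+1) ≤ 2^(i+1) / Real.sqrt ((n:ℝ)+1) := by
      rw [div_le_div_iff₀ (by positivity) hL, one_mul]
      apply Real.sqrt_le_iff.2
      refine ⟨by positivity, ?_⟩
      rw [mul_pow, Real.sq_sqrt (by positivity)]
      have h1 : ((i:ℝ)+2) ≤ (2^(i+1))^2 := by
        have a1 : i + 1 < 2^(i+1) := Nat.lt_two_pow_self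
        have a2 : ((i:ℝ)+2) ≤ 2^(i+1) := by
          have : i + 2 ≤ 2^(i+1) := a1
          exact_mod_cast this
        nlinarith [(Nat.cast_nonneg i : (0:ℝ) ≤ i)]
      have hk0 : (0:ℝ) ≤ k := Nat.cast_nonneg k
      have hi0 : (0:ℝ) ≤ i := Nat.cast_nonneg i
      have h2 : ((n:ℝ)+1) ≤ ((i:ℝ)+2) * ((k:ℝ)+1) := by
        rw [hn]; push_cast; nlinarith
      nlinarith
    have e2 : cc (n+1) (k+1) * ((k+1).factorial : ℝ) * nab^[i+1] (IH k) (x:ℝ) / tt (n+1) =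
      (cc (n+1) (k+1) * ((k+1).factorial : ℝ) / tt (n+1)) * nab^[i+1] (IH k) (x:ℝ) := by ring
    rw [e2, abs_mul, abs_of_nonneg hw0]
    calc _ ≤ (K / 8^(i+1)) * (2^i * (108 * (2^(i+1) / Real.sqrt ((n:ℝ)+1)))) := by
          refine mul_le_mul (hw.trans hbt) (hn1.trans ?_) (abs_nonneg _) (by positivity)
          rw [show 108 / Real.sqrt ((k:ℝ)+1) = 108 * (1 / Real.sqrt ((k:ℝ)+1)) by ring]
          gcongr
      _ = (K * 108 / Real.sqrt ((n:ℝ)+1)) * (2^i * 2^(i+1) / 8^(i+1)) := by ring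
      _ ≤ _ := by
          apply mul_le_mul_of_nonneg_left _ (by positivity)
          rw [show (8:ℝ) = 2 * 4 by norm_num, mul_pow, div_le_iff₀ (by positivity)]
          have : (1/2:ℝ)^(i+1) * (2^(i+1) * 4^(i+1)) = 4^(i+1) := by
            rw [← mul_assoc, ← mul_pow]; norm_num
          rw [this, show (4:ℝ) = 2 * 2 by norm_num, mul_pow]
          gcongr
          · norm_num
          · omega
  refine (Finset.sum_le_sum hterm).trans ?_
  rw [← Finset.mul_sum]
  have := mul_le_mul_of_nonneg_left (sum_half L) (by positivity : 0 ≤ K * 108 / Real.sqrt ((L:ℝ)+1))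
  simpa using this

/-- Berry–Esseen bound for the number of descents in random involutions. -/
theorem descents_involutions_berry_esseen :
    ∃ C : ℝ, 0 < C ∧ ∀ n : ℕ, 2 ≤ n → ∀ x : ℝ,
      |invCDF n x - stdNormalCDF x| ≤ C / Real.sqrt n := by
  obtain ⟨K, hK, hcount⟩ := count_approx
  refine ⟨K + 63, by positivity, fun n hn y => ?_⟩
  obtain ⟨m, rfl⟩ : ∃ m, n = m + 2 := ⟨n - 2, by omega⟩
  obtain ⟨hN, hM, hV⟩ := moments m
  have tp := tt_pos (m+2)
  set w := cc (m+2) m * (m.factorial : ℝ) / tt (m+2) with hw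
  have hw0 : 0 ≤ w := by
    have := (cc_props (m+2) m).1
    positivity
  have hw1 : w ≤ 1/2 := by
    rw [hw, div_le_iff₀ tp, mul_comm]
    have := cc_bound (m+2) m 2 rfl
    have e : bt 2 = 1/2 := by simp [bt]
    rwa [e] at this
  have hm : (0:ℝ) ≤ m := Nat.cast_nonneg m
  have hVpos : 0 < invVar (m+2) := by rw [hV]; positivity
  set s := Real.sqrt (invVar (m+2)) with hs
  have spos : 0 < s := Real.sqrt_pos.2 hVpos
  have ssq : s^2 = ((m:ℝ)+3)/12 + 2 * w := by rw [hs, Real.sq_sqrt hVpos.le, hV]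
  obtain ⟨σ, hσ, hσ2, hσb⟩ := inv_sig (m+1)
  set x : ℤ := ⌊((m:ℝ)+1)/2 + s * y⌋ + 1 with hx
  have hset : ((involutions (m+2)).filter fun π =>
      ((descents π : ℝ) - invMean (m+2)) / Real.sqrt (invVar (m+2)) ≤ y) =
      (involutions (m+1+1)).filter fun π => (descents π : ℤ) + 1 ≤ x := by
    apply Finset.filter_congr
    intro π _
    rw [hM, ← hs, div_le_iff₀ spos, hx, add_le_add_iff_right, Int.le_floor]
    push_cast
    constructor <;> intro h <;> linarith
  have h1 := hcount (m+1) x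
  have h2 := IH_be (m+1) hσ hσ2 (x:ℝ)
  have h3 := Phi_lip (s / σ * y) (((x:ℝ) - (((m+1:ℕ):ℝ)+1)/2)/σ)
  have hc : invCDF (m+2) y = (((involutions (m+1+1)).filter fun π =>
      (descents π : ℤ) + 1 ≤ x).card : ℝ) / tt (m+1+1) := by
    unfold invCDF
    rw [hset, hN]
  rw [← hc] at h1
  have f1 : (x:ℝ) - 1 ≤ ((m:ℝ)+1)/2 + s * y := by
    have := Int.floor_le (((m:ℝ)+1)/2 + s * y)
    rw [hx]; push_cast; linarith
  have f2 : ((m:ℝ)+1)/2 + s * y < x := by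
    have := Int.lt_floor_add_one (((m:ℝ)+1)/2 + s * y)
    rw [hx]; push_cast; linarith
  have h3' : |((x:ℝ) - (((m+1:ℕ):ℝ)+1)/2)/σ - s / σ * y| ≤ 1/σ := by
    rw [show ((x:ℝ) - (((m+1:ℕ):ℝ)+1)/2)/σ - s / σ * y =
      ((x:ℝ) - (((m+1:ℕ):ℝ)+1)/2 - s * y)/σ by ring, abs_div, abs_of_pos hσ]
    gcongr
    push_cast
    rw [abs_le]
    constructor <;> linarith
  push_cast at hσ2
  have ha : 1 ≤ s / σ := by
    rw [le_div_iff₀ hσ, one_mul]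
    apply (pow_le_pow_iff_left₀ hσ.le spos.le two_ne_zero).1
    rw [ssq, hσ2]; linarith
  have hn2 : (1:ℝ) ≤ Real.sqrt ((m:ℝ)+2) := by
    rw [Real.one_le_sqrt]; linarith
  have hsqn : Real.sqrt ((m:ℝ)+2) * Real.sqrt ((m:ℝ)+2) = (m:ℝ)+2 := Real.mul_self_sqrt (by linarith)
  have ha2 : s / σ - 1 ≤ 7 / Real.sqrt ((m:ℝ)+2) := by
    have e : (s/σ)^2 - 1 ≤ 13 / ((m:ℝ)+2) := by
      rw [div_pow, ssq, hσ2, ← sub_nonneg]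
      have : 13 / ((m:ℝ)+2) - ((((m:ℝ)+3)/12 + 2 * w) / (((m:ℝ)+1+1)/12) - 1) =
        (12 - 24 * w) / ((m:ℝ)+2) := by
        field_simp; ring
      rw [this]
      apply div_nonneg <;> linarith
    have e2 : s/σ - 1 ≤ ((s/σ)^2 - 1)/2 := by nlinarith [sq_nonneg (s/σ - 1)]
    have e3 : 13 / ((m:ℝ)+2) ≤ 14 / Real.sqrt ((m:ℝ)+2) := by
      rw [div_le_div_iff₀ (by positivity) (by positivity)]
      nlinarith
    have e4 : 7 / Real.sqrt ((m:ℝ)+2) = (14 / Real.sqrt ((m:ℝ)+2))/2 := by ring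
    linarith
  have h4 := Phi_scale ha y
  have em : ((m+1:ℕ):ℝ)+1 = (m:ℝ)+2 := by push_cast; ring
  rw [em] at h1 hσb h2 h3 h3'
  have en : ((m+2:ℕ):ℝ) = (m:ℝ)+2 := by push_cast; ring
  rw [en]
  have a1 := abs_le.1 h1
  have a2 := abs_le.1 h2
  have a3 := abs_le.1 (h3.trans h3')
  have a4 := abs_le.1 h4
  have e13 : 13/σ = 13 * (1/σ) := by ring
  rw [e13] at a2
  have etot : (K + 63) / Real.sqrt ((m:ℝ)+2) = K / Real.sqrt ((m:ℝ)+2) +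
    14 * (4 / Real.sqrt ((m:ℝ)+2)) + 7 / Real.sqrt ((m:ℝ)+2) := by ring
  rw [etot, abs_le]
  constructor <;> linarith [a1.1, a1.2, a2.1, a2.2, a3.1, a3.2, a4.1, a4.2]
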